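/- arXiv:1707.05661 — 2 statements merged into one kernel-verified Lean document; each statement's English description precedes it below -/
import Mathlib

section
/- The class of σ-scattered linear orders is well quasi-ordered by embeddability: for every sequence ⟨L_i : i ∈ ℕ⟩ of σ-scattered linear orders there exist indices i < j such that L_i order-embeds into L_j. -/
/-- A linear order is scattered if the rationals do not order-embed into it. -/
def Scattered (α : Type*) [LinearOrder α] : Prop := IsEmpty (ℚ ↪o α)

/-- A linear order is σ-scattered if it is the union of countably many subsets,
each scattered in its induced order. -/
def SigmaScattered (α : Type*) [LinearOrder α] : Prop :=
  ∃ A : ℕ → Set α, (⋃ n, A n) = Set.univ ∧ ∀ n, Scattered (A n)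

/-!
Separate a σ-scattered order, and again each of the sets obtained, into pieces that lie one after
the other along an ordinal or its reverse, according to Hausdorff's decomposition of the first of
its scattered parts still met. Each point is then isolated after finitely many steps, although the
tree of all pieces need not be well-founded. Call an order coded if it is the least order closed
under certain transfinite sums of orders coded earlier, where the order itself may occur as a
summand as well.

Every set `P` in a terminating splitting is coded. The label of `P` records the sum of its pieces,
with a placeholder for the uncoded ones. If `P` were uncoded, then well-quasi-ordering of the labels
would give an uncoded `P₀` from which any label reachable at one place is dominated by a reachable
one everywhere else. Matching labels recursively, all uncoded sets reachable from `P₀` embed into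
each other, and `P₀` is the least order closed under their labels, hence coded.

Coded orders are well quasi-ordered since they are even better-quasi-ordered: in a minimal bad array
of them, each term is closed under a label that the next one is not closed under, and these labels
form a bad array. By Nash-Williams's theorem on transfinite sequences, some of their entries form a
bad array as well, and these are coded earlier, contradicting minimality.
-/

namespace Laver

open Set

universe u v

theorem exists_seq_of_forall_exists {α : Type*} {P : α → Prop} {R : α → α → Prop} {a₀ : α}
    (h₀ : P a₀) (h : ∀ a, P a → ∃ b, P b ∧ R a b) :
    ∃ S : ℕ → α, S 0 = a₀ ∧ (∀ n, P (S n)) ∧ ∀ n, R (S n) (S (n + 1)) := by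
  choose next hP hR using h
  let S : ℕ → {a // P a} := fun n => n.rec ⟨a₀, h₀⟩ fun _ a => ⟨next a a.2, hP a a.2⟩
  exact ⟨fun n => (S n).1, rfl, fun n => (S n).2, fun n => hR (S n).1 (S n).2⟩

/-! ### Locally constant functions on infinite sets of natural numbers -/

section InfSubsets

/-- `[D]^ω`, the infinite subsets of a set `D` of natural numbers. -/
def infSubsets (D : Set ℕ) : Set (Set ℕ) := {X | X ⊆ D ∧ X.Infinite}

/-- The shift `X ↦ X⁻`, deleting the least element of `X`. -/
def tail (X : Set ℕ) : Set ℕ := X \ {sInf X}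

/-- Continuity of a function on `[D]^ω`, a subspace of Cantor space, into a discrete space. -/
def LocallyConstantOn {β : Type*} (f : Set ℕ → β) (D : Set ℕ) : Prop :=
  ∀ X ∈ infSubsets D, ∃ k, ∀ Y ∈ infSubsets D, Y ∩ Iio k = X ∩ Iio k → f Y = f X

variable {D D' X Y : Set ℕ} {k l : ℕ}

theorem infSubsets_mono (h : D' ⊆ D) : infSubsets D' ⊆ infSubsets D := fun _ hX =>
  ⟨hX.1.trans h, hX.2⟩

theorem self_mem_infSubsets (hD : D.Infinite) : D ∈ infSubsets D := ⟨Subset.rfl, hD⟩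

theorem tail_subset (X : Set ℕ) : tail X ⊆ X := sdiff_subset

theorem tail_mem_infSubsets (hX : X ∈ infSubsets D) : tail X ∈ infSubsets D :=
  ⟨(tail_subset X).trans hX.1, hX.2.sdiff (finite_singleton _)⟩

theorem sInf_lt_of_mem_tail {x : ℕ} (hx : x ∈ tail X) : sInf X < x :=
  (Nat.sInf_le hx.1).lt_of_ne fun h => hx.2 h.symm

theorem insert_sInf_tail (hX : X.Nonempty) : insert (sInf X) (tail X) = X :=
  insert_sdiff_self_of_mem (Nat.sInf_mem hX)

theorem inter_Iio_eq_of_le (hkl : k ≤ l) (h : Y ∩ Iio l = X ∩ Iio l) :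
    Y ∩ Iio k = X ∩ Iio k := by
  rw [← inter_eq_right.2 (Iio_subset_Iio hkl), ← inter_assoc, h, inter_assoc]

theorem sInf_eq_of_inter_Iio_eq (hX : X.Nonempty) (hk : sInf X < k)
    (h : Y ∩ Iio k = X ∩ Iio k) : sInf Y = sInf X := by
  have hXY : sInf X ∈ Y ∩ Iio k := h ▸ ⟨Nat.sInf_mem hX, hk⟩
  have hle : sInf Y ≤ sInf X := Nat.sInf_le hXY.1
  have hYX : sInf Y ∈ X ∩ Iio k := h ▸ ⟨Nat.sInf_mem ⟨_, hXY.1⟩, hle.trans_lt hk⟩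
  exact hle.antisymm (Nat.sInf_le hYX.1)

theorem tail_inter_Iio_eq (hX : X.Nonempty) (hk : sInf X < k) (h : Y ∩ Iio k = X ∩ Iio k) :
    tail Y ∩ Iio k = tail X ∩ Iio k := by
  rw [tail, tail, sInf_eq_of_inter_Iio_eq hX hk h, ← inter_sdiff_right_comm,
    ← inter_sdiff_right_comm, h]

namespace LocallyConstantOn

variable {β γ δ : Type*} {f : Set ℕ → β} {g : Set ℕ → γ}

theorem mono (h : LocallyConstantOn f D) (hD : D' ⊆ D) : LocallyConstantOn f D' := fun X hX =>
  (h X (infSubsets_mono hD hX)).imp fun _ hk Y hY => hk Y (infSubsets_mono hD hY)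

theorem map₂ (op : β → γ → δ) (hf : LocallyConstantOn f D) (hg : LocallyConstantOn g D) :
    LocallyConstantOn (fun X => op (f X) (g X)) D := by
  intro X hX
  obtain ⟨k, hk⟩ := hf X hX
  obtain ⟨l, hl⟩ := hg X hX
  refine ⟨max k l, fun Y hY h => ?_⟩
  exact congrArg₂ op (hk Y hY (inter_Iio_eq_of_le (le_max_left k l) h))
    (hl Y hY (inter_Iio_eq_of_le (le_max_right k l) h))

theorem map (op : β → γ) (hf : LocallyConstantOn f D) :
    LocallyConstantOn (fun X => op (f X)) D :=
  hf.map₂ (fun b _ => op b) hf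

theorem comp_tail (hf : LocallyConstantOn f D) : LocallyConstantOn (fun X => f (tail X)) D := by
  intro X hX
  obtain ⟨k, hk⟩ := hf (tail X) (tail_mem_infSubsets hX)
  refine ⟨max k (sInf X + 1), fun Y hY h => hk _ (tail_mem_infSubsets hY) ?_⟩
  exact inter_Iio_eq_of_le (le_max_left _ _)
    (tail_inter_Iio_eq hX.2.nonempty (Nat.lt_of_succ_le (le_max_right _ _)) h)

theorem sInf (D : Set ℕ) : LocallyConstantOn sInf D := fun _ hX =>
  ⟨_, fun _ _ => sInf_eq_of_inter_Iio_eq hX.2.nonempty (Nat.lt_succ_self _)⟩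

end LocallyConstantOn

end InfSubsets

/-! ### The Nash-Williams partition theorem -/

section NashWilliams

/-- `q = (t, l)` codes a one-point end-extension of `p = (s, k)`, where a pair `(s, k)` stands for
the finite set `s ⊆ Iio k` as the part below `k` of a set still to be constructed. -/
def EndExtends (p q : Set ℕ × ℕ) : Prop := ∃ x, p.2 ≤ x ∧ q = (insert x p.1, x + 1)

theorem EndExtends.inter_Iio_eq {p q : Set ℕ × ℕ} (h : EndExtends p q) (hp : p.1 ⊆ Iio p.2) :
    q.1 ∩ Iio p.2 = p.1 := by
  obtain ⟨x, hx, rfl⟩ := h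
  rw [insert_inter_of_notMem (notMem_Iio.2 hx), inter_eq_left.2 hp]

section Limit

variable {S : ℕ → Set ℕ × ℕ} (h : ∀ n, EndExtends (S n) (S (n + 1)))
include h

theorem le_snd_of_endExtends (n : ℕ) : n ≤ (S n).2 := by
  induction n with
  | zero => exact zero_le
  | succ n ih =>
    obtain ⟨x, hx, hS⟩ := h n
    rw [hS]
    exact Nat.succ_le_succ (ih.trans hx)

theorem infinite_iUnion_of_endExtends : (⋃ k, (S k).1).Infinite := by
  refine infinite_of_forall_exists_gt fun n => ?_
  obtain ⟨x, hx, hS⟩ := h (n + 1)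
  refine ⟨x, mem_iUnion.2 ⟨n + 2, ?_⟩, (le_snd_of_endExtends h (n + 1)).trans hx⟩
  rw [hS]
  exact mem_insert x _

variable (h₀ : (S 0).1 ⊆ Iio (S 0).2)
include h₀

theorem fst_subset_Iio_of_endExtends (n : ℕ) : (S n).1 ⊆ Iio (S n).2 := by
  induction n with
  | zero => exact h₀
  | succ n ih =>
    obtain ⟨x, hx, hS⟩ := h n
    rw [hS]
    exact insert_subset (Nat.lt_succ_self x) (ih.trans (Iio_subset_Iio (by simp only; omega)))

theorem iUnion_inter_Iio_of_endExtends (n : ℕ) : (⋃ k, (S k).1) ∩ Iio (S n).2 = (S n).1 := by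
  have hsub := fst_subset_Iio_of_endExtends h h₀
  have hstep (k : ℕ) := (h k).inter_Iio_eq (hsub k)
  have hmono : Monotone fun k => (S k).1 := monotone_nat_of_le_succ fun k =>
    (hstep k).symm.subset.trans inter_subset_left
  have hbound : Monotone fun k => (S k).2 := monotone_nat_of_le_succ fun k => by
    obtain ⟨x, hx, hS⟩ := h k
    rw [hS]
    exact hx.trans (Nat.le_succ x)
  have hlater : ∀ k, n ≤ k → (S k).1 ∩ Iio (S n).2 ⊆ (S n).1 := by
    intro k hk
    induction k, hk using Nat.le_induction with
    | base => exact inter_subset_left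
    | succ k hk ih =>
      exact fun x hx => ih ⟨(hstep k).subset ⟨hx.1, hx.2.trans_le (hbound hk)⟩, hx.2⟩
  refine Subset.antisymm ?_ (subset_inter (subset_iUnion (fun k => (S k).1) n) (hsub n))
  rintro x ⟨hx, hxn⟩
  obtain ⟨k, hk⟩ := mem_iUnion.1 hx
  exact hlater (max k n) (le_max_right k n) ⟨hmono (le_max_left k n) hk, hxn⟩

end Limit

variable {κ : Type*} {c : Set ℕ → κ} {D s : Set ℕ} {k : ℕ}

/-- Below every infinite `A ⊆ D` there are sets `B` such that `c` is constant on the infinite sets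
starting with `s` and continuing in `B`; here `s` stands for a finite subset of `Iio k`. -/
def HomogeneousAbove (c : Set ℕ → κ) (D s : Set ℕ) (k : ℕ) : Prop :=
  ∀ A ∈ infSubsets (D ∩ Ici k), ∃ B ∈ infSubsets A, ∃ v, ∀ Z ∈ infSubsets B, c (s ∪ Z) = v

theorem strictMono_sInf_of_subset_tail {E : ℕ → Set ℕ} (hE : ∀ i, (E i).Nonempty)
    (h : ∀ i, E (i + 1) ⊆ tail (E i)) : StrictMono fun i => sInf (E i) :=
  strictMono_nat_of_lt_succ fun i => sInf_lt_of_mem_tail (h i (Nat.sInf_mem (hE (i + 1))))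

theorem exists_eq_insert_of_subset_image_sInf {E : ℕ → Set ℕ} (hE : ∀ i, (E i).Nonempty)
    (h : ∀ i, E (i + 1) ⊆ tail (E i)) {I Z : Set ℕ} (hZ : Z ⊆ (fun i => sInf (E i)) '' I)
    (hne : Z.Nonempty) :
    ∃ i ∈ I, Z = insert (sInf (E i)) (tail Z) ∧ tail Z ⊆ E (i + 1) := by
  obtain ⟨i, hi, hiZ⟩ := hZ (Nat.sInf_mem hne)
  replace hiZ : sInf (E i) = sInf Z := hiZ
  refine ⟨i, hi, by rw [hiZ, insert_sInf_tail hne], fun x hx => ?_⟩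
  obtain ⟨j, -, rfl⟩ := hZ (tail_subset Z hx)
  have hij : sInf (E i) < sInf (E j) := hiZ ▸ sInf_lt_of_mem_tail hx
  have hanti : Antitone E := antitone_nat_of_succ_le fun n => (h n).trans (tail_subset _)
  exact hanti ((strictMono_sInf_of_subset_tail hE h).lt_iff_lt.1 hij) (Nat.sInf_mem (hE j))

theorem HomogeneousAbove.of_insert [Finite κ]
    (h : ∀ n ∈ D, k ≤ n → HomogeneousAbove c D (insert n s) (n + 1)) :
    HomogeneousAbove c D s k := by
  intro A hA
  have hstep : ∀ E ∈ infSubsets A, ∃ E' ∈ infSubsets A, E' ⊆ tail E ∧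
      ∃ v, ∀ Z ∈ infSubsets E', c (insert (sInf E) s ∪ Z) = v := by
    intro E hE
    have hmem := hA.1 (hE.1 (Nat.sInf_mem hE.2.nonempty))
    obtain ⟨B, hB, v, hv⟩ := h (sInf E) hmem.1 hmem.2 (tail E)
      ⟨fun x hx => ⟨(hA.1 (hE.1 hx.1)).1, sInf_lt_of_mem_tail hx⟩, (tail_mem_infSubsets hE).2⟩
    exact ⟨B, infSubsets_mono (tail_mem_infSubsets hE).1 hB, hB.1, v, hv⟩
  obtain ⟨E, -, hEA, hE⟩ := exists_seq_of_forall_exists (self_mem_infSubsets hA.2) hstep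
  choose htail v hv using hE
  have hne (i : ℕ) : (E i).Nonempty := (hEA i).2.nonempty
  obtain ⟨w, hw⟩ := Finite.exists_infinite_fiber v
  refine ⟨(fun i => sInf (E i)) '' (v ⁻¹' {w}), ⟨?_, (infinite_coe_iff.1 hw).image
    (strictMono_sInf_of_subset_tail hne htail).injective.injOn⟩, w, fun Z hZ => ?_⟩
  · rintro _ ⟨i, -, rfl⟩
    exact (hEA i).1 (Nat.sInf_mem (hne i))
  · obtain ⟨i, rfl, hZi, htl⟩ := exists_eq_insert_of_subset_image_sInf hne htail hZ.1 hZ.2.nonempty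
    rw [hZi, union_insert, ← insert_union]
    exact hv i _ ⟨htl, (tail_mem_infSubsets hZ).2⟩

theorem LocallyConstantOn.homogeneousAbove_empty [Finite κ] (hc : LocallyConstantOn c D) :
    HomogeneousAbove c D ∅ 0 := by
  by_contra h₀
  obtain ⟨S, hS₀, hS, hext⟩ := exists_seq_of_forall_exists
    (P := fun p : Set ℕ × ℕ => p.1 ⊆ D ∧ ¬ HomogeneousAbove c D p.1 p.2) (R := EndExtends)
    (a₀ := (∅, 0)) ⟨empty_subset D, h₀⟩ (by
      rintro ⟨s, k⟩ ⟨hs, hhom⟩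
      obtain ⟨n, hn, hkn, hhom'⟩ :
          ∃ n ∈ D, k ≤ n ∧ ¬ HomogeneousAbove c D (insert n s) (n + 1) := by
        by_contra! hcon
        exact hhom (.of_insert hcon)
      exact ⟨(insert n s, n + 1), ⟨insert_subset hn hs, hhom'⟩, n, hkn, rfl⟩)
  have h₀' : (S 0).1 ⊆ Iio (S 0).2 := by simp [hS₀]
  have hinf := infinite_iUnion_of_endExtends hext
  obtain ⟨k, hk⟩ := hc (⋃ n, (S n).1) ⟨iUnion_subset fun n => (hS n).1, hinf⟩
  refine (hS k).2 fun A hA => ⟨A, self_mem_infSubsets hA.2, c (⋃ n, (S n).1), fun Z hZ => ?_⟩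
  refine hk _ ⟨union_subset (hS k).1 ((hZ.1.trans hA.1).trans inter_subset_left),
    hZ.2.mono subset_union_right⟩ ?_
  refine inter_Iio_eq_of_le (le_snd_of_endExtends hext k) ?_
  have hZk : Z ∩ Iio (S k).2 = ∅ :=
    (disjoint_left.2 fun x hx => notMem_Iio.2 (hA.1 (hZ.1 hx)).2).inter_eq
  rw [union_inter_distrib_right, hZk, union_empty, iUnion_inter_Iio_of_endExtends hext h₀',
    inter_eq_left.2 (fst_subset_Iio_of_endExtends hext h₀' k)]

theorem LocallyConstantOn.exists_homogeneous [Finite κ] (hc : LocallyConstantOn c D)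
    (hD : D.Infinite) : ∃ Y ∈ infSubsets D, ∃ v, ∀ X ∈ infSubsets Y, c X = v := by
  obtain ⟨Y, hY, v, hv⟩ := hc.homogeneousAbove_empty D ⟨fun x hx => ⟨hx, Nat.zero_le x⟩, hD⟩
  exact ⟨Y, hY, v, fun X hX => empty_union X ▸ hv X hX⟩

theorem LocallyConstantOn.exists_forall_or_forall_not {p : Set ℕ → Prop}
    (hp : LocallyConstantOn p D) (hD : D.Infinite) :
    ∃ Y ∈ infSubsets D, (∀ X ∈ infSubsets Y, p X) ∨ ∀ X ∈ infSubsets Y, ¬ p X := by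
  obtain ⟨Y, hY, v, hv⟩ := hp.exists_homogeneous hD
  refine ⟨Y, hY, ?_⟩
  by_cases h : v
  · exact .inl fun X hX => (hv X hX).symm ▸ h
  · exact .inr fun X hX => (hv X hX).symm ▸ h

end NashWilliams

/-! ### Minimal bad arrays -/

/-- A bad `r`-array: a locally constant map `val` on the infinite subsets of an infinite set `dom`
for which no `val X` is `r`-below its shift `val (tail X)`. The values of `val` outside
`infSubsets dom` are junk. -/
structure BadArray {Q : Type*} (r : Q → Q → Prop) where
  dom : Set ℕ
  val : Set ℕ → Q
  infinite : dom.Infinite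
  locallyConstantOn : LocallyConstantOn val dom
  not_rel_tail : ∀ X ∈ infSubsets dom, ¬ r (val X) (val (tail X))

namespace BadArray

section Below

variable {Q Q' Q'' : Type*} {r : Q → Q → Prop} {r' : Q' → Q' → Prop} {r'' : Q'' → Q'' → Prop}

instance : CoeFun (BadArray r) fun _ => Set ℕ → Q := ⟨val⟩

/-- `G` is defined on a subset of the domain of `F`, and there each of its values is `R`-related
to that of `F`. With `≤` and `<` for `R` these are the two comparisons of arrays that enter the
theory of minimal bad arrays. -/
def Below (G : BadArray r') (R : Q' → Q → Prop) (F : BadArray r) : Prop :=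
  G.dom ⊆ F.dom ∧ ∀ X ∈ infSubsets G.dom, R (G X) (F X)

theorem Below.trans {F : BadArray r} {G : BadArray r'} {H : BadArray r''} {R : Q' → Q → Prop}
    {R' : Q'' → Q' → Prop} {R'' : Q'' → Q → Prop} (hHG : H.Below R' G) (hGF : G.Below R F)
    (hR : ∀ ⦃a b c⦄, R' a b → R b c → R'' a c) : H.Below R'' F :=
  ⟨hHG.1.trans hGF.1, fun X hX => hR (hHG.2 X hX) (hGF.2 X (infSubsets_mono hHG.1 hX))⟩

end Below

section Minimal

variable {Q : Type*} {r : Q → Q → Prop}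

theorem exists_limit {F : ℕ → BadArray r} {E : Set ℕ} {y : ℕ → ℕ} (hE : E.Infinite)
    (hdom : ∀ n, E ⊆ (F n).dom) (hy : ∀ X ∈ infSubsets E, ∃ n, y n ∈ X)
    (hF : ∀ n k, n < k → ∀ X ∈ infSubsets E, y n ∈ X → F k X = F (n + 1) X) :
    ∃ G : BadArray r, G.dom = E ∧ ∀ n k, n < k → ∀ X ∈ infSubsets E, y n ∈ X → G X = F k X := by
  let N (X : Set ℕ) : ℕ := sInf {n | y n ∈ X} + 1
  let g (X : Set ℕ) : Q := F (N X) X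
  have hg : ∀ n k, n < k → ∀ X ∈ infSubsets E, y n ∈ X → g X = F k X := fun n k hk X hX hn =>
    (hF _ k ((Nat.sInf_le (s := {n | y n ∈ X}) hn).trans_lt hk) X hX
      (Nat.sInf_mem (s := {n | y n ∈ X}) ⟨n, hn⟩)).symm
  refine ⟨⟨E, g, hE, fun X hX => ?_, fun X hX => ?_⟩, rfl, hg⟩
  · obtain ⟨n, hn⟩ := hy X hX
    obtain ⟨k, hk⟩ := (F (n + 1)).locallyConstantOn X (infSubsets_mono (hdom _) hX)
    refine ⟨max k (y n + 1), fun Y hY h => ?_⟩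
    have hnY : y n ∈ Y :=
      (h.superset ⟨hn, Nat.lt_of_succ_le (le_max_right _ _)⟩).1
    rw [hg n (n + 1) n.lt_succ_self Y hY hnY, hg n (n + 1) n.lt_succ_self X hX hn]
    exact hk Y (infSubsets_mono (hdom _) hY) (inter_Iio_eq_of_le (le_max_left _ _) h)
  · obtain ⟨n, hn⟩ := hy (tail X) (tail_mem_infSubsets hX)
    rw [hg n (n + 1) n.lt_succ_self X hX (tail_subset X hn),
      hg n (n + 1) n.lt_succ_self _ (tail_mem_infSubsets hX) hn]
    exact (F (n + 1)).not_rel_tail X (infSubsets_mono (hdom _) hX)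

variable [PartialOrder Q] {F G H : BadArray r} {s t : Set ℕ} {m : ℕ}

theorem exists_glue (hr : ∀ a b c, r a b → b < c → r a c) (hHF : H.Below (· < ·) F)
    (hs : s ⊆ H.dom) (m : ℕ) :
    ∃ G : BadArray r, G.dom = F.dom ∩ Iio m ∪ H.dom \ Iio m ∧
      (∀ X ∈ infSubsets G.dom, X ∩ Iio m ⊆ s → X ⊆ H.dom ∧ G X = H X) ∧
      ∀ X ∈ infSubsets G.dom, ¬ X ∩ Iio m ⊆ s → G X = F X := by
  classical
  let E : Set ℕ := F.dom ∩ Iio m ∪ H.dom \ Iio m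
  let g (X : Set ℕ) : Q := if X ∩ Iio m ⊆ s then H X else F X
  have hEF : E ⊆ F.dom := union_subset inter_subset_left (sdiff_subset.trans hHF.1)
  have hEH : ∀ X ∈ infSubsets E, X ∩ Iio m ⊆ s → X ∈ infSubsets H.dom := fun X hX hXs =>
    ⟨fun x hx => (hX.1 hx).elim (fun h => hs (hXs ⟨hx, h.2⟩)) And.left, hX.2⟩
  refine ⟨⟨E, g, (H.infinite.sdiff (finite_Iio m)).mono subset_union_right, fun X hX => ?_,
    fun X hX => ?_⟩, rfl, fun X hX h => ⟨(hEH X hX h).1, if_pos h⟩, fun X _ h => if_neg h⟩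
  · by_cases hXs : X ∩ Iio m ⊆ s
    · obtain ⟨k, hk⟩ := H.locallyConstantOn X (hEH X hX hXs)
      refine ⟨max k m, fun Y hY h => ?_⟩
      have hYs : Y ∩ Iio m ⊆ s := inter_Iio_eq_of_le (le_max_right k m) h ▸ hXs
      simp only [g, if_pos hXs, if_pos hYs]
      exact hk Y (hEH Y hY hYs) (inter_Iio_eq_of_le (le_max_left k m) h)
    · obtain ⟨k, hk⟩ := F.locallyConstantOn X (infSubsets_mono hEF hX)
      refine ⟨max k m, fun Y hY h => ?_⟩
      have hYs : ¬ Y ∩ Iio m ⊆ s := inter_Iio_eq_of_le (le_max_right k m) h ▸ hXs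
      simp only [g, if_neg hXs, if_neg hYs]
      exact hk Y (infSubsets_mono hEF hY) (inter_Iio_eq_of_le (le_max_left k m) h)
  · have hX' := tail_mem_infSubsets hX
    by_cases hXs : X ∩ Iio m ⊆ s
    · have hXs' : tail X ∩ Iio m ⊆ s := (inter_subset_inter_left _ (tail_subset X)).trans hXs
      simp only [g, if_pos hXs, if_pos hXs']
      exact H.not_rel_tail X (hEH X hX hXs)
    · have hbad := F.not_rel_tail X (infSubsets_mono hEF hX)
      by_cases hXs' : tail X ∩ Iio m ⊆ s
      · simp only [g, if_neg hXs, if_pos hXs']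
        exact fun h => hbad (hr _ _ _ h (hHF.2 _ (hEH _ hX' hXs')))
      · simpa only [g, if_neg hXs, if_neg hXs'] using hbad

/-- `G ≤ F`, and `G` differs from `F` only at sets `X` which lie, together with `s`, in the domain
of a bad array strictly below `F`. -/
def Refines (s : Set ℕ) (G F : BadArray r) : Prop :=
  G.Below (· ≤ ·) F ∧ ∀ X ∈ infSubsets G.dom, G X ≠ F X →
    ∃ H : BadArray r, H.Below (· < ·) F ∧ X ⊆ H.dom ∧ s ⊆ H.dom

theorem Refines.refl (s : Set ℕ) (F : BadArray r) : Refines s F F :=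
  ⟨⟨Subset.rfl, fun _ _ => le_rfl⟩, fun _ _ h => absurd rfl h⟩

theorem Refines.trans (hGH : Refines s G H) (hHF : Refines s H F) : Refines s G F := by
  refine ⟨hGH.1.trans hHF.1 fun _ _ _ => le_trans, fun X hX hne => ?_⟩
  by_cases h : H X = F X
  · obtain ⟨K, hK, hXs⟩ := hGH.2 X hX (h ▸ hne)
    exact ⟨K, hK.trans hHF.1 fun _ _ _ => lt_of_lt_of_le, hXs⟩
  · exact hHF.2 X (infSubsets_mono hGH.1.1 hX) h

theorem Refines.mono (hst : s ⊆ t) (h : Refines t G F) : Refines s G F :=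
  ⟨h.1, fun X hX hne => (h.2 X hX hne).imp fun _ hK => ⟨hK.1, hK.2.1, hst.trans hK.2.2⟩⟩

/-- The invariant of the construction of a minimal bad array: no refinement of `F` which keeps the
part of its domain below `m` can stop `s` from lying in the domain of a strictly smaller array. -/
def Improvable (F : BadArray r) (m : ℕ) (s : Set ℕ) : Prop :=
  ∀ G, Refines s G F → F.dom ∩ Iio m ⊆ G.dom → ∃ H : BadArray r, H.Below (· < ·) G ∧ s ⊆ H.dom

theorem Improvable.of_refines (h : F.Improvable m s) (hGF : Refines s G F)
    (hm : F.dom ∩ Iio m ⊆ G.dom) : G.Improvable m s := fun K hK hKm =>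
  h K (hK.trans hGF) fun _ hx => hKm ⟨hm hx, hx.2⟩

theorem Improvable.exists_refines_lt (hr : ∀ a b c, r a b → b < c → r a c)
    (hF : F.Improvable m s) :
    ∃ G, Refines s G F ∧ F.dom ∩ Iio m ⊆ G.dom ∧
      ∀ X ∈ infSubsets G.dom, X ∩ Iio m = s → G X < F X := by
  obtain ⟨H, hHF, hsH⟩ := hF F (.refl s F) inter_subset_left
  obtain ⟨G, hdom, hGH, hGF⟩ := exists_glue hr hHF hsH m
  have hlt : ∀ X ∈ infSubsets G.dom, X ∩ Iio m ⊆ s → G X < F X := fun X hX hXs =>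
    (hGH X hX hXs).2 ▸ hHF.2 X ⟨(hGH X hX hXs).1, hX.2⟩
  refine ⟨G, ⟨⟨?_, fun X hX => ?_⟩, fun X hX hne => ⟨H, hHF, ?_, hsH⟩⟩,
    hdom ▸ subset_union_left, fun X hX h => hlt X hX h.subset⟩
  · exact hdom ▸ union_subset inter_subset_left (sdiff_subset.trans hHF.1)
  · by_cases hXs : X ∩ Iio m ⊆ s
    · exact (hlt X hX hXs).le
    · exact (hGF X hX hXs).le
  · exact (hGH X hX (by_contra fun hXs => hne (hGF X hX hXs))).1

section StuckSequence

variable {F : ℕ → BadArray r} {x : ℕ → ℕ}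
  (href : ∀ n, Refines (insert (x n) s) (F (n + 1)) (F n))
include href

theorem refines_of_le {n k : ℕ} (hnk : n ≤ k) : Refines s (F k) (F n) := by
  induction k, hnk using Nat.le_induction with
  | base => exact .refl s _
  | succ k _ ih => exact ((href k).mono (subset_insert _ _)).trans ih

theorem mem_dom_of_stuck (hx : StrictMono x) (hmem : ∀ n, x n ∈ (F n).dom)
    (hdom : ∀ n, (F n).dom ∩ Iic (x n) ⊆ (F (n + 1)).dom) (n k : ℕ) : x n ∈ (F k).dom := by
  rcases le_total k n with h | h
  · exact (refines_of_le href h).1.1 (hmem n)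
  · induction k, h using Nat.le_induction with
    | base => exact hmem n
    | succ k hk ih => exact hdom k ⟨ih, hx.monotone hk⟩

/- The values at a set containing `x n` are final from stage `n + 1` on, so the `F n` have a limit
on the set of all `x n` and the part of the first domain below `m`. -/
theorem exists_limit_of_stuck (hx : StrictMono x) (hmem : ∀ n, x n ∈ (F n).dom)
    (hdom : ∀ n, (F n).dom ∩ Iic (x n) ⊆ (F (n + 1)).dom) (hm : m ≤ x 0)
    (hstuck : ∀ n (H : BadArray r), H.Below (· < ·) (F (n + 1)) → ¬ insert (x n) s ⊆ H.dom) :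
    ∃ G : BadArray r, (∀ k, Refines s G (F k)) ∧ (F 0).dom ∩ Iio m ⊆ G.dom ∧
      ∀ X ∈ infSubsets G.dom, ∃ n, x n ∈ X := by
  have hbelow : ∀ k, (F 0).dom ∩ Iio m ⊆ (F k).dom := fun k => by
    induction k with
    | zero => exact inter_subset_left
    | succ k ih =>
      exact fun z hz => hdom k ⟨ih hz, (hz.2.trans_le hm).le.trans (hx.monotone (Nat.zero_le k))⟩
  let E : Set ℕ := (F 0).dom ∩ Iio m ∪ range x
  have hE : ∀ k, E ⊆ (F k).dom := fun k =>
    union_subset (hbelow k) (range_subset_iff.2 fun n => mem_dom_of_stuck href hx hmem hdom n k)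
  have hEx : ∀ X ∈ infSubsets E, ∃ n, x n ∈ X := fun X hX => by
    obtain ⟨z, hz, hmz⟩ := hX.2.exists_gt m
    obtain h | ⟨n, rfl⟩ := hX.1 hz
    exacts [absurd h.2 hmz.not_gt, ⟨n, hz⟩]
  have hfinal : ∀ n k, n < k → ∀ X ∈ infSubsets E, x n ∈ X → F k X = F (n + 1) X := by
    intro n k hnk X hX hn
    by_contra hne
    obtain ⟨H, hH, hXH, hsH⟩ := (refines_of_le href hnk).2 X (infSubsets_mono (hE k) hX) hne
    exact hstuck n H hH (insert_subset (hXH hn) hsH)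
  obtain ⟨G, hGE, hG⟩ := exists_limit
    ((infinite_range_of_injective hx.injective).mono subset_union_right) hE hEx hfinal
  have hGF : ∀ k, ∀ X ∈ infSubsets G.dom, ∃ l ≥ k, X ∈ infSubsets (F l).dom ∧ G X = F l X := by
    intro k X hX
    replace hX := infSubsets_mono hGE.subset hX
    obtain ⟨n, hn⟩ := hEx X hX
    have hl := le_max_right k (n + 1)
    exact ⟨_, le_max_left k (n + 1), infSubsets_mono (hE _) hX, hG n _ hl X hX hn⟩
  refine ⟨G, fun k => ⟨⟨hGE.subset.trans (hE k), fun X hX => ?_⟩, fun X hX hne => ?_⟩,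
    subset_union_left.trans hGE.superset, fun X hX => hEx X (infSubsets_mono hGE.subset hX)⟩
  · obtain ⟨l, hkl, hXl, hGl⟩ := hGF k X hX
    exact hGl ▸ (refines_of_le href hkl).1.2 X hXl
  · obtain ⟨l, hkl, hXl, hGl⟩ := hGF k X hX
    exact (refines_of_le href hkl).2 X hXl (hGl ▸ hne)

theorem not_improvable_of_stuck (hx : StrictMono x) (hmem : ∀ n, x n ∈ (F n).dom)
    (hdom : ∀ n, (F n).dom ∩ Iic (x n) ⊆ (F (n + 1)).dom) (hm : m ≤ x 0)
    (hstuck : ∀ n (H : BadArray r), H.Below (· < ·) (F (n + 1)) → ¬ insert (x n) s ⊆ H.dom) :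
    ¬ (F 0).Improvable m s := by
  intro hF
  obtain ⟨G, hGF, hGm, hGx⟩ := exists_limit_of_stuck href hx hmem hdom hm hstuck
  obtain ⟨H, hHG, hsH⟩ := hF G (hGF 0) hGm
  obtain ⟨n, hn⟩ := hGx H.dom ⟨hHG.1, H.infinite⟩
  exact hstuck n H (hHG.trans (hGF (n + 1)).1 fun _ _ _ => lt_of_lt_of_le) (insert_subset hn hsH)

end StuckSequence

theorem Improvable.exists_insert (hF : F.Improvable m s) :
    ∃ G, Refines s G F ∧ F.dom ∩ Iio m ⊆ G.dom ∧ ∃ x ∈ G.dom, m ≤ x ∧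
      G.Improvable (x + 1) (insert x s) := by
  by_contra! hcon
  obtain ⟨x₀, hx₀, hmx₀⟩ := F.infinite.exists_gt m
  obtain ⟨S, hS₀, hS, hstep⟩ := exists_seq_of_forall_exists
    (P := fun p : BadArray r × ℕ =>
      Refines s p.1 F ∧ F.dom ∩ Iio m ⊆ p.1.dom ∧ p.2 ∈ p.1.dom ∧ m ≤ p.2)
    (R := fun p q => p.2 < q.2 ∧ Refines (insert p.2 s) q.1 p.1 ∧
      p.1.dom ∩ Iic p.2 ⊆ q.1.dom ∧
      ∀ H : BadArray r, H.Below (· < ·) q.1 → ¬ insert p.2 s ⊆ H.dom)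
    (a₀ := (F, x₀)) ⟨.refl s F, inter_subset_left, hx₀, hmx₀.le⟩ (by
      rintro ⟨G, x⟩ ⟨hGF, hm, hx, hmx⟩
      obtain ⟨K, hKG, hxK, hstuck⟩ :
          ∃ K, Refines (insert x s) K G ∧ G.dom ∩ Iio (x + 1) ⊆ K.dom ∧
            ∀ H : BadArray r, H.Below (· < ·) K → ¬ insert x s ⊆ H.dom := by
        simpa only [Improvable, not_forall, not_exists, not_and, exists_prop] using
          hcon G hGF hm x hx hmx
      obtain ⟨x', hx', hxx'⟩ := K.infinite.exists_gt x
      refine ⟨(K, x'), ⟨(hKG.mono (subset_insert x s)).trans hGF, fun z hz => hxK ⟨hm hz, ?_⟩,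
        hx', hmx.trans hxx'.le⟩, hxx', hKG, fun z hz => hxK ⟨hz.1, Nat.lt_succ_of_le hz.2⟩,
        hstuck⟩
      exact hz.2.trans_le (hmx.trans x.le_succ))
  refine not_improvable_of_stuck (F := fun n => (S n).1) (x := fun n => (S n).2)
    (fun n => (hstep n).2.1) (strictMono_nat_of_lt_succ fun n => (hstep n).1)
    (fun n => (hS n).2.2.1) (fun n => (hstep n).2.2.1) (hS 0).2.2.2
    (fun n => (hstep n).2.2.2) ?_
  rwa [hS₀]

theorem Improvable.exists_endExtends (hr : ∀ a b c, r a b → b < c → r a c)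
    (hs : s ⊆ F.dom ∩ Iio m) (hF : F.Improvable m s) :
    ∃ (G : BadArray r) (q : Set ℕ × ℕ), EndExtends (s, m) q ∧ q.1 ⊆ G.dom ∩ Iio q.2 ∧
      G.Improvable q.2 q.1 ∧ G.dom ⊆ F.dom ∧
      ∀ X ∈ infSubsets G.dom, X ∩ Iio m = s → G X < F X := by
  obtain ⟨H, hHF, hHm, hlt⟩ := hF.exists_refines_lt hr
  obtain ⟨G, hGH, hGm, x, hx, hmx, hG⟩ := (hF.of_refines hHF hHm).exists_insert
  refine ⟨G, (insert x s, x + 1), ⟨x, hmx, rfl⟩, insert_subset ⟨hx, Nat.lt_succ_self x⟩ ?_, hG,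
    hGH.1.1.trans hHF.1.1, fun X hX h =>
      (hGH.1.2 X hX).trans_lt (hlt X (infSubsets_mono hGH.1.1 hX) h)⟩
  exact fun z hz => ⟨hGm ⟨hHm (hs hz), (hs hz).2⟩, (hs hz).2.trans_le (hmx.trans x.le_succ)⟩

theorem exists_minimal [WellFoundedLT Q] (hr : ∀ a b c, r a b → b < c → r a c)
    (F₀ : BadArray r) :
    ∃ F : BadArray r, F.Below (· ≤ ·) F₀ ∧ ∀ H : BadArray r, ¬ H.Below (· < ·) F := by
  by_contra! hcon
  have h₀ : F₀.Improvable 0 ∅ := fun G hG _ =>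
    (hcon G hG.1).imp fun _ hH => ⟨hH, empty_subset _⟩
  obtain ⟨S, -, hS, hstep⟩ := exists_seq_of_forall_exists
    (P := fun p : BadArray r × Set ℕ × ℕ =>
      p.2.1 ⊆ p.1.dom ∩ Iio p.2.2 ∧ p.1.Improvable p.2.2 p.2.1)
    (R := fun p q => EndExtends p.2 q.2 ∧ q.1.dom ⊆ p.1.dom ∧
      ∀ X ∈ infSubsets q.1.dom, X ∩ Iio p.2.2 = p.2.1 → q.1 X < p.1 X)
    (a₀ := (F₀, ∅, 0)) ⟨empty_subset _, h₀⟩ (by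
      rintro ⟨F, s, m⟩ ⟨hs, hF⟩
      obtain ⟨G, q, hq, hsub, hG, hGF⟩ := hF.exists_endExtends hr hs
      exact ⟨(G, q), ⟨hsub, hG⟩, hq, hGF⟩)
  have hext (n : ℕ) : EndExtends (S n).2 (S (n + 1)).2 := (hstep n).1
  let X : Set ℕ := ⋃ n, (S n).2.1
  have hinter (n : ℕ) : X ∩ Iio (S n).2.2 = (S n).2.1 :=
    iUnion_inter_Iio_of_endExtends hext ((hS 0).1.trans inter_subset_right) n
  have hdom : Antitone fun n => (S n).1.dom := antitone_nat_of_succ_le fun n => (hstep n).2.1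
  have hX (n : ℕ) : X ∈ infSubsets (S n).1.dom := by
    refine ⟨fun x hx => ?_, infinite_iUnion_of_endExtends hext⟩
    have hxN : x < (S (max n (x + 1))).2.2 :=
      Nat.lt_of_succ_le ((le_max_right n _).trans (le_snd_of_endExtends hext _))
    exact hdom (le_max_left n (x + 1)) ((hS _).1 ((hinter _).subset ⟨hx, hxN⟩)).1
  exact not_strictAnti_of_wellFoundedLT (fun n => (S n).1 X) <| strictAnti_nat_of_succ_lt fun n =>
    (hstep n).2.2 X (hX (n + 1)) (hinter n)

end Minimal

end BadArray

/-! ### Better-quasi-orders -/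

/-- Nash-Williams's notion of a better-quasi-order, for an arbitrary relation: there is no bad
array. -/
def IsBQO {Q : Type*} (r : Q → Q → Prop) : Prop := IsEmpty (BadArray r)

section IsBQO

variable {A : Type*} {r : A → A → Prop}

theorem IsBQO.wellQuasiOrdered (h : IsBQO r) : WellQuasiOrdered r := by
  intro f
  by_contra! hf
  refine h.false ⟨univ, fun X => f (sInf X), infinite_univ, (LocallyConstantOn.sInf univ).map f,
    fun X hX => hf _ _ ?_⟩
  exact sInf_lt_of_mem_tail (Nat.sInf_mem (tail_mem_infSubsets hX).2.nonempty)

theorem BadArray.exists_below_snd {κ : Type*} [Finite κ]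
    (F : BadArray fun p q : κ × A => p.1 = q.1 ∧ r p.2 q.2) :
    ∃ G : BadArray r, G.Below (fun a p => p.2 = a) F := by
  obtain ⟨Y, hY, i, hi⟩ := (F.locallyConstantOn.map Prod.fst).exists_homogeneous F.infinite
  refine ⟨⟨Y, fun X => (F X).2, hY.2, (F.locallyConstantOn.map Prod.snd).mono hY.1,
    fun X hX hr => F.not_rel_tail X (infSubsets_mono hY.1 hX) ⟨?_, hr⟩⟩, hY.1, fun X _ => rfl⟩
  rw [hi X hX, hi _ (tail_mem_infSubsets hX)]

theorem BadArray.exists_below_some (F : BadArray (Option.Rel r)) :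
    ∃ G : BadArray r, G.Below (fun a o => o = some a) F := by
  obtain ⟨Y, hY, hnone | hsome⟩ :=
    (F.locallyConstantOn.map (· = none)).exists_forall_or_forall_not F.infinite
  · refine absurd ?_ (F.not_rel_tail Y hY)
    rw [hnone Y (self_mem_infSubsets hY.2),
      hnone _ (tail_mem_infSubsets (self_mem_infSubsets hY.2))]
    exact .none
  · obtain ⟨a₀, -⟩ := Option.ne_none_iff_exists'.1 (hsome Y (self_mem_infSubsets hY.2))
    have hval : ∀ X ∈ infSubsets Y, F X = some ((F X).getD a₀) := fun X hX => by
      obtain ⟨a, ha⟩ := Option.ne_none_iff_exists'.1 (hsome X hX)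
      rw [ha, Option.getD_some]
    refine ⟨⟨Y, fun X => (F X).getD a₀, hY.2,
      (F.locallyConstantOn.map fun o => o.getD a₀).mono hY.1,
      fun X hX hr => F.not_rel_tail X (infSubsets_mono hY.1 hX) ?_⟩, hY.1, hval⟩
    rw [hval X hX, hval _ (tail_mem_infSubsets hX)]
    exact .some hr

theorem IsBQO.comap {B : Type*} (h : IsBQO r) (f : B → A) : IsBQO (InvImage r f) :=
  ⟨fun F => h.false ⟨F.dom, fun X => f (F X), F.infinite, F.locallyConstantOn.map f,
    F.not_rel_tail⟩⟩

theorem IsBQO.prod_finite {κ : Type*} [Finite κ] (h : IsBQO r) :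
    IsBQO fun p q : κ × A => p.1 = q.1 ∧ r p.2 q.2 :=
  ⟨fun F => h.false F.exists_below_snd.choose⟩

theorem IsBQO.option (h : IsBQO r) : IsBQO (Option.Rel r) :=
  ⟨fun F => h.false F.exists_below_some.choose⟩

end IsBQO

/-! ### Transfinite sequences -/

/-- A sequence of elements of `A` of length an arbitrary ordinal; the values of `entry` from `len`
on are junk. -/
@[ext]
structure OrdSeq (A : Type v) : Type (max (u + 1) v) where
  len : Ordinal.{u}
  entry : Ordinal.{u} → A

namespace OrdSeq

variable {A : Type v} {r : A → A → Prop} {a b c : OrdSeq.{u} A} {i j : Ordinal.{u}}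

/-- The order by initial segments. Junk entries are compared as well, which is harmless for its use
in comparing a sequence with its truncations. -/
instance : PartialOrder (OrdSeq.{u} A) where
  le a b := a.len ≤ b.len ∧ a.entry = b.entry
  le_refl _ := ⟨le_rfl, rfl⟩
  le_trans _ _ _ hab hbc := ⟨hab.1.trans hbc.1, hab.2.trans hbc.2⟩
  le_antisymm _ _ hab hba := OrdSeq.ext (hab.1.antisymm hba.1) hab.2

theorem lt_iff : a < b ↔ a.len < b.len ∧ a.entry = b.entry :=
  ⟨fun h => ⟨lt_of_not_ge fun hba => h.2 ⟨hba, h.1.2.symm⟩, h.1.2⟩,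
    fun h => ⟨⟨h.1.le, h.2⟩, fun hba => h.1.not_ge hba.1⟩⟩

instance : WellFoundedLT (OrdSeq.{u} A) :=
  StrictMono.wellFoundedLT (f := len) fun _ _ h => (lt_iff.1 h).1

/-- The initial segment of length `i`. -/
def take (a : OrdSeq.{u} A) (i : Ordinal.{u}) : OrdSeq.{u} A := ⟨i, a.entry⟩

theorem take_lt (hi : i < a.len) : a.take i < a := lt_iff.2 ⟨hi, rfl⟩

/-- Embeddability of transfinite sequences over a relation on the entries. -/
def Embeds (r : A → A → Prop) (a b : OrdSeq.{u} A) : Prop :=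
  ∃ φ : Ordinal.{u} → Ordinal.{u}, StrictMonoOn φ (Iio a.len) ∧
    ∀ i < a.len, φ i < b.len ∧ r (a.entry i) (b.entry (φ i))

theorem Embeds.trans_le (hab : a.Embeds r b) (hbc : b ≤ c) : a.Embeds r c := by
  obtain ⟨φ, hmono, hφ⟩ := hab
  exact ⟨φ, hmono, fun i hi => ⟨(hφ i hi).1.trans_le hbc.1, hbc.2 ▸ (hφ i hi).2⟩⟩

theorem Embeds.take_succ (h : (a.take i).Embeds r (b.take j)) (hj : j < b.len)
    (hr : r (a.entry i) (b.entry j)) : (a.take (Order.succ i)).Embeds r b := by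
  obtain ⟨φ, hmono, hφ⟩ := h
  have hlt : ∀ k < i, Function.update φ i j k = φ k := fun k hk => Function.update_of_ne hk.ne _ _
  refine ⟨Function.update φ i j, fun k hk l hl hkl => ?_, fun k hk => ?_⟩
  · replace hl : l ≤ i := Order.lt_succ_iff.1 hl
    have hki : k < i := hkl.trans_le hl
    rcases hl.lt_or_eq with hli | rfl
    · rw [hlt k hki, hlt l hli]
      exact hmono hki hli hkl
    · rw [hlt k hki, Function.update_self]
      exact (hφ k hki).1
  · rcases (Order.lt_succ_iff.1 hk).lt_or_eq with hki | rfl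
    · rw [hlt k hki]
      exact ⟨(hφ k hki).1.trans hj, (hφ k hki).2⟩
    · rw [Function.update_self]
      exact ⟨hj, hr⟩

/-- The pointwise least candidate for an embedding of `a` into `b`: each entry is sent to the first
possible place beyond those already used. -/
noncomputable def greedy (r : A → A → Prop) (a b : OrdSeq.{u} A) (i : Ordinal.{u}) : Ordinal.{u} :=
  sInf {j | (∀ k, ∀ _ : k < i, greedy r a b k < j) ∧ r (a.entry i) (b.entry j)}
termination_by i

theorem greedy_spec {φ : Ordinal.{u} → Ordinal.{u}} {l : Ordinal.{u}}
    (hmono : StrictMonoOn φ (Iio l)) (hφ : ∀ i < l, r (a.entry i) (b.entry (φ i))) (hi : i < l) :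
    greedy r a b i ≤ φ i ∧ (∀ k < i, greedy r a b k < greedy r a b i) ∧
      r (a.entry i) (b.entry (greedy r a b i)) := by
  induction i using WellFoundedLT.induction with
  | ind i ih =>
    have hmem : φ i ∈ {j | (∀ k, ∀ _ : k < i, greedy r a b k < j) ∧ r (a.entry i) (b.entry j)} :=
      ⟨fun k hk => (ih k hk (hk.trans hi)).1.trans_lt (hmono (hk.trans hi) hi hk), hφ i hi⟩
    have hinf := csInf_mem ⟨φ i, hmem⟩
    have hle := csInf_le' hmem
    rw [← greedy] at hinf hle
    exact ⟨hle, hinf⟩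

theorem exists_not_embeds_take_succ (h : ¬ a.Embeds r b) :
    ∃ i < a.len, ¬ (a.take (Order.succ i)).Embeds r b := by
  by_contra! hcon
  have hgreedy : ∀ i < a.len, greedy r a b i < b.len ∧
      (∀ k < i, greedy r a b k < greedy r a b i) ∧
      r (a.entry i) (b.entry (greedy r a b i)) := fun i hi => by
    obtain ⟨φ, hmono, hφ⟩ := hcon i hi
    have hspec := greedy_spec (a := a) hmono (fun k hk => (hφ k hk).2) (Order.lt_succ i)
    exact ⟨hspec.1.trans_lt (hφ i (Order.lt_succ i)).1, hspec.2⟩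
  exact h ⟨greedy r a b, fun k _ i hi hki => (hgreedy i hi).2.1 k hki,
    fun i hi => ⟨(hgreedy i hi).1, (hgreedy i hi).2.2⟩⟩

/- In a minimal bad array of sequences, cut each term at the point where it stops embedding into the
next one. By minimality the cut terms embed into each other along a suitable domain, so that the
entries at the cuts must form a bad array. -/
theorem exists_below_entry (F : BadArray (Embeds.{u} r)) :
    ∃ G : BadArray r, G.Below (fun x a => ∃ i < a.len, a.entry i = x) F := by
  obtain ⟨M, hMF, hmin⟩ := F.exists_minimal fun _ _ _ h hlt => h.trans_le hlt.le
  have hcut : ∀ a b : OrdSeq.{u} A, ¬ a.Embeds r b →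
      ∃ i < a.len, ¬ (a.take (Order.succ i)).Embeds r b := fun _ _ => exists_not_embeds_take_succ
  choose! cut hcut_lt hcut using hcut
  let i (X : Set ℕ) : Ordinal.{u} := cut (M X) (M (tail X))
  let T (X : Set ℕ) : OrdSeq.{u} A := (M X).take (i X)
  have hbad : ∀ X ∈ infSubsets M.dom,
      i X < (M X).len ∧ ¬ ((M X).take (Order.succ (i X))).Embeds r (M (tail X)) :=
    fun X hX => ⟨hcut_lt _ _ (M.not_rel_tail X hX), hcut _ _ (M.not_rel_tail X hX)⟩
  have hT : LocallyConstantOn T M.dom :=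
    M.locallyConstantOn.map₂ (fun a b => a.take (cut a b)) M.locallyConstantOn.comp_tail
  obtain ⟨Y, hY, hembeds | hnot⟩ :=
    (hT.map₂ (Embeds r) hT.comp_tail).exists_forall_or_forall_not M.infinite
  · refine ⟨⟨Y, fun X => (T X).entry (i X), hY.2, ?_, fun X hX hr => ?_⟩, hY.1.trans hMF.1, ?_⟩
    · exact (hT.map fun a => a.entry a.len).mono hY.1
    · have hX' := infSubsets_mono hY.1 hX
      exact (hbad X hX').2 ((hembeds X hX).take_succ (hbad _ (tail_mem_infSubsets hX')).1 hr)
    · intro X hX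
      have hX' := infSubsets_mono hY.1 hX
      have hle := hMF.2 X hX'
      exact ⟨i X, (hbad X hX').1.trans_le hle.1, congrFun hle.2.symm _⟩
  · exact absurd ⟨hY.1, fun X hX => take_lt (hbad X (infSubsets_mono hY.1 hX)).1⟩
      (hmin ⟨Y, T, hY.2, hT.mono hY.1, hnot⟩)

end OrdSeq

theorem IsBQO.ordSeq {A : Type v} {r : A → A → Prop} (h : IsBQO r) :
    IsBQO (OrdSeq.Embeds.{u} r) :=
  ⟨fun F => h.false (OrdSeq.exists_below_entry F).choose⟩

/-! ### Splittings of σ-scattered orders -/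

theorem nonempty_rat_orderEmbedding_of_dense {α : Type*} [LinearOrder α] {r : α → α → Prop}
    (hlt : ∀ x y, r x y → x < y) (htrans : ∀ x y z, r x y → r y z → r x z)
    (hdense : ∀ x y, r x y → ∃ z, r x z ∧ r z y) {x y : α} (hxy : r x y) :
    Nonempty (ℚ ↪o α) := by
  obtain ⟨E, hE, hsub⟩ := (IsChain.pair hxy).exists_maxChain
  have hr : ∀ a ∈ E, ∀ b ∈ E, a < b → r a b := fun a ha b hb hab =>
    (hE.isChain ha hb hab.ne).resolve_right fun h => (hlt b a h).not_gt hab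
  have hE_dense : DenselyOrdered E := by
    refine ⟨fun ⟨a, ha⟩ ⟨b, hb⟩ hab => ?_⟩
    obtain ⟨z, haz, hzb⟩ := hdense a b (hr a ha b hb hab)
    by_contra! hcon
    have hchain : IsChain r (insert z E) := hE.isChain.insert fun e he _ => by
      rcases le_or_gt e a with hea | hae
      · rcases hea.eq_or_lt with rfl | hea
        exacts [.inr haz, .inr (htrans _ _ _ (hr e he a ha hea) haz)]
      · rcases (show b ≤ e from hcon ⟨e, he⟩ hae).eq_or_lt with rfl | hbe
        exacts [.inl hzb, .inl (htrans _ _ _ hzb (hr b hb e he hbe))]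
    have hz : z ∈ E := hE.2 hchain (subset_insert z E) ▸ mem_insert z E
    exact (hcon ⟨z, hz⟩ (hlt _ _ haz)).not_gt (hlt _ _ hzb)
  have hE_nontrivial : Nontrivial E :=
    ⟨⟨x, hsub (.inl rfl)⟩, ⟨y, hsub (.inr rfl)⟩, fun h => (hlt x y hxy).ne (congrArg Subtype.val h)⟩
  obtain ⟨g⟩ := Order.embedding_from_countable_to_dense ℚ E
  exact ⟨g.trans (OrderEmbedding.subtype _)⟩

/-- The strict order of `α` for `b = true`, its reverse for `b = false`. -/
def SignedLT {α : Type*} [LT α] : Bool → α → α → Prop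
  | true, x, y => x < y
  | false, x, y => y < x

namespace SignedLT

variable {α : Type*} [LinearOrder α] {b : Bool} {x y : α}

theorem map_iff {β : Type*} [LinearOrder β] {f : α → β} (hf : StrictMono f) :
    SignedLT b (f x) (f y) ↔ SignedLT b x y := by
  cases b
  exacts [hf.lt_iff_lt, hf.lt_iff_lt]

theorem lt_of_lt {β : Type*} [LinearOrder β] {x' y' : β} (h : SignedLT b x y)
    (h' : SignedLT b x' y') (hlt : x < y) : x' < y' := by
  cases b
  exacts [absurd h hlt.not_gt, h']

theorem gt_of_gt {β : Type*} [LinearOrder β] {x' y' : β} (h : SignedLT b x y)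
    (h' : SignedLT b x' y') (hgt : y < x) : y' < x' := by
  cases b
  exacts [h', absurd h hgt.not_gt]

theorem lt_or_gt (h : x ≠ y) : SignedLT b x y ∨ SignedLT b y x := by
  cases b
  exacts [h.lt_or_gt.symm, h.lt_or_gt]

end SignedLT

section Separates

variable {L : Type u} [LinearOrder L] {A P P' S : Set L} {b : Bool} {f : L → Ordinal.{u}}
  {o o' : Ordinal.{u}}

/-- The nonempty fibres `P ∩ f ⁻¹' {o}` lie one after the other in `L`, from left to right for
`b = true` and from right to left for `b = false`. -/
def Separates (b : Bool) (f : L → Ordinal.{u}) (P : Set L) : Prop :=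
  ∀ x ∈ P, ∀ y ∈ P, f x < f y → SignedLT b x y

theorem Separates.mono (h : Separates b f P) (hP : P' ⊆ P) : Separates b f P' :=
  fun x hx y hy => h x (hP hx) y (hP hy)

/-- Separating `P` repeatedly leads to one-point sets and sets disjoint from `A`, and the
well-founded tree of separations has rank at most `o`. -/
inductive DecompRankLE (A : Set L) : Ordinal.{u} → Set L → Prop
  | base {o : Ordinal.{u}} {P : Set L} (h : P.Subsingleton ∨ Disjoint P A) : DecompRankLE A o P
  | split {o o' : Ordinal.{u}} {P : Set L} (ho : o < o') (b : Bool) (f : L → Ordinal.{u})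
      (hf : Separates b f P) (h : ∀ x ∈ P, DecompRankLE A o (P ∩ f ⁻¹' {f x})) :
      DecompRankLE A o' P

theorem DecompRankLE.mono (h : DecompRankLE A o P) (ho : o ≤ o') (hP : P' ⊆ P) :
    DecompRankLE A o' P' := by
  induction h generalizing P' o' with
  | base h => exact .base (h.imp (fun h => h.anti hP) fun h => h.mono_left hP)
  | split ho₁ b f hf _ ih =>
    exact .split (ho₁.trans_le ho) b f (hf.mono hP) fun x hx =>
      ih x (hP hx) le_rfl (inter_subset_inter_left _ hP)

/-- Separating `P` repeatedly leads to one-point sets and sets disjoint from `A`. -/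
def Decomposable (A P : Set L) : Prop := ∃ o, DecompRankLE A o P

namespace Decomposable

theorem mono (h : Decomposable A P) (hP : P' ⊆ P) : Decomposable A P' :=
  h.imp fun _ ho => ho.mono le_rfl hP

theorem of_subsingleton (h : P.Subsingleton) : Decomposable A P := ⟨0, .base (.inl h)⟩

theorem of_disjoint (h : Disjoint P A) : Decomposable A P := ⟨0, .base (.inr h)⟩

theorem of_separates (hf : Separates b f P) (h : ∀ x ∈ P, Decomposable A (P ∩ f ⁻¹' {f x})) :
    Decomposable A P := by
  choose! rank hrank using h
  refine ⟨Order.succ (⨆ x : P, rank x), .split (Order.lt_succ _) b f hf fun x hx => ?_⟩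
  exact (hrank x hx).mono (Ordinal.le_iSup (fun x : P => rank x) ⟨x, hx⟩) Subset.rfl

theorem of_isUpperSet (hS : IsUpperSet S) (h₁ : Decomposable A (P ∩ S))
    (h₂ : Decomposable A (P \ S)) : Decomposable A P := by
  classical
  let f (x : L) : Ordinal.{u} := if x ∈ S then 1 else 0
  have hf₁ : ∀ x ∈ S, f x = 1 := fun _ hx => if_pos hx
  have hf₀ : ∀ x ∉ S, f x = 0 := fun _ hx => if_neg hx
  refine of_separates (b := true) (f := f) (fun x _ y _ hxy => ?_) fun x _ => ?_
  · have hyS : y ∈ S := by_contra fun hy => (hf₀ y hy ▸ hxy).not_ge zero_le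
    exact lt_of_not_ge fun hyx => hxy.ne ((hf₁ x (hS hyx hyS)).trans (hf₁ y hyS).symm)
  · by_cases hx : x ∈ S
    · exact h₁.mono fun y ⟨hy, hyx⟩ => ⟨hy, by_contra fun hyS =>
        zero_ne_one ((hf₀ y hyS).symm.trans (hyx.trans (hf₁ x hx)))⟩
    · exact h₂.mono fun y ⟨hy, hyx⟩ => ⟨hy, fun hyS =>
        one_ne_zero ((hf₁ y hyS).symm.trans (hyx.trans (hf₀ x hx)))⟩

/- A well-ordering of `ι` turns the union into a sum: separate by the first `I i` containing `x`. -/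
theorem inter_iUnion {ι : Type u} {I : ι → Set L}
    (hI : ∀ i, ∀ x ∈ I i, ∀ y, SignedLT b y x → y ∈ I i) (h : ∀ i, Decomposable A (P ∩ I i)) :
    Decomposable A (P ∩ ⋃ i, I i) := by
  let rank : ι → Ordinal.{u} := Ordinal.typein WellOrderingRel
  let f (x : L) : Ordinal.{u} := sInf (rank '' {i | x ∈ I i})
  have hf : ∀ x ∈ ⋃ i, I i, ∃ i, x ∈ I i ∧ rank i = f x := fun x hx =>
    csInf_mem (Nonempty.image rank (s := {i | x ∈ I i}) (mem_iUnion.1 hx))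
  refine of_separates (b := b) (f := f) (fun x hx y _ hxy => ?_) fun x hx => ?_
  · obtain ⟨i, hi, hif⟩ := hf x hx.2
    have hyi : y ∉ I i := fun hyi => (hif.trans_lt hxy).not_ge (csInf_le' ⟨i, hyi, rfl⟩)
    exact (SignedLT.lt_or_gt fun h : x = y => hyi (h ▸ hi)).resolve_right fun h =>
      hyi (hI i x hi y h)
  · obtain ⟨i, -, hif⟩ := hf x hx.2
    refine (h i).mono fun y ⟨hy, hyx⟩ => ⟨hy.1, ?_⟩
    obtain ⟨j, hj, hjf⟩ := hf y hy.2
    rwa [← Ordinal.typein_injective WellOrderingRel ((hjf.trans hyx).trans hif.symm)]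

theorem inter_Iic {a : L} (h : Decomposable A (P ∩ Iio a)) : Decomposable A (P ∩ Iic a) :=
  of_isUpperSet (isUpperSet_Ici a)
    (of_subsingleton fun _ hx _ hy =>
      (hx.1.2.antisymm hx.2).trans (hy.1.2.antisymm hy.2).symm)
    (h.mono fun _ hx => ⟨hx.1.1, not_le.1 hx.2⟩)

theorem inter_Ici {a : L} (h : Decomposable A (P ∩ Ioi a)) : Decomposable A (P ∩ Ici a) :=
  of_isUpperSet (isUpperSet_Ioi a) (h.mono fun _ hx => ⟨hx.1.1, hx.2⟩)
    (of_subsingleton fun _ hx _ hy =>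
      ((not_lt.1 hx.2).antisymm hx.1.2).trans ((not_lt.1 hy.2).antisymm hy.1.2).symm)

theorem exists_not_inter_Iio_Ioi (h : ¬ Decomposable A P) :
    ∃ a ∈ P ∩ A, ¬ Decomposable A (P ∩ Iio a) ∧ ¬ Decomposable A (P ∩ Ioi a) := by
  by_contra! hcon
  let B : Set L := ⋃ a : {a | Decomposable A (P ∩ Iic a)}, Iic a.1
  let C : Set L := ⋃ a : {a | Decomposable A (P ∩ Ici a)}, Ici a.1
  have hB : Decomposable A (P ∩ B) :=
    inter_iUnion (b := true) (fun a x hx y hyx => (le_of_lt hyx).trans hx) fun a => a.2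
  have hC : Decomposable A (P ∩ C) :=
    inter_iUnion (b := false) (fun a x hx y hyx => (le_of_lt hyx).trans' hx) fun a => a.2
  have hBC : Disjoint ((P \ C) ∩ Bᶜ) A := disjoint_left.2 fun x ⟨⟨hxP, hxC⟩, hxB⟩ hxA => by
    refine hxC (mem_iUnion.2 ⟨⟨x, inter_Ici (hcon x ⟨hxP, hxA⟩ fun hd => ?_)⟩, le_rfl⟩)
    exact hxB (mem_iUnion.2 ⟨⟨x, inter_Iic hd⟩, le_rfl⟩)
  refine h (of_isUpperSet (S := C) (isUpperSet_iUnion fun a => isUpperSet_Ici a.1) hC ?_)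
  have hBlower : IsLowerSet B := isLowerSet_iUnion fun a => isLowerSet_Iic a.1
  exact of_isUpperSet (S := Bᶜ) hBlower.compl (of_disjoint hBC)
    (hB.mono fun x hx => ⟨hx.1.1, not_not.1 hx.2⟩)

theorem of_scattered (hA : Scattered A) (P : Set L) : Decomposable A P := by
  by_contra hP
  obtain ⟨y, ⟨-, hyA⟩, hy, -⟩ := exists_not_inter_Iio_Ioi hP
  obtain ⟨x, ⟨⟨-, hxy⟩, hxA⟩, -, hx⟩ := exists_not_inter_Iio_Ioi hy
  refine not_nonempty_iff.2 hA <| nonempty_rat_orderEmbedding_of_dense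
    (r := fun x y : A => x < y ∧ ¬ Decomposable A (P ∩ Ioo x.1 y.1)) (fun _ _ => And.left)
    (fun x y z hxy hyz => ⟨hxy.1.trans hyz.1, fun h => hxy.2 <|
      h.mono (inter_subset_inter_right _ (Ioo_subset_Ioo_right hyz.1.le))⟩)
    (fun x y ⟨_, hd⟩ => ?_) (x := ⟨x, hxA⟩) (y := ⟨y, hyA⟩)
    ⟨hxy, fun h => hx (h.mono fun z hz => ⟨hz.1.1, hz.2, hz.1.2⟩)⟩
  obtain ⟨a, ⟨⟨-, hxa, hay⟩, haA⟩, h₁, h₂⟩ := exists_not_inter_Iio_Ioi hd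
  exact ⟨⟨a, haA⟩, ⟨hxa, fun h => h₁ (h.mono fun z hz => ⟨hz.1.1, hz.1.2.1, hz.2⟩)⟩,
    hay, fun h => h₂ (h.mono fun z hz => ⟨hz.1.1, hz.2, hz.1.2.2⟩)⟩

end Decomposable

/-- The least rank of a well-founded tree of separations witnessing `Decomposable A P`; it is `0`
if there is none. -/
noncomputable def decompRank (A P : Set L) : Ordinal.{u} := sInf {o | DecompRankLE A o P}

theorem Decomposable.exists_separates_decompRank_lt (h : Decomposable A P)
    (hP : ¬ P.Subsingleton) (hPA : ¬ Disjoint P A) :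
    ∃ b f, Separates b f P ∧ ∀ x ∈ P, decompRank A (P ∩ f ⁻¹' {f x}) < decompRank A P := by
  have hrank : DecompRankLE A (decompRank A P) P := csInf_mem h
  generalize decompRank A P = o' at hrank
  cases hrank with
  | base h => exact absurd h (not_or.2 ⟨hP, hPA⟩)
  | split ho b f hf h => exact ⟨b, f, hf, fun x hx => (csInf_le' (s := {o | DecompRankLE A o _})
      (h x hx)).trans_lt ho⟩

end Separates

/-- A rule for separating every subset of `L` into pieces indexed by ordinals. -/
structure Splitting (L : Type u) [LinearOrder L] where
  sign : Set L → Bool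
  index : Set L → L → Ordinal.{u}
  separates : ∀ P, Separates (sign P) (index P) P

namespace Splitting

variable {L : Type u} [LinearOrder L] (S : Splitting L) {P : Set L} {x : L}

/-- The piece of `P` of index `o`. -/
def piece (P : Set L) (o : Ordinal.{u}) : Set L := P ∩ S.index P ⁻¹' {o}

/-- The piece of `P` containing `x`. -/
def pieceAt (x : L) (P : Set L) : Set L := S.piece P (S.index P x)

/-- A common bound for all indices. -/
noncomputable def bound : Ordinal.{u} := Order.succ (⨆ q : Set L × L, S.index q.1 q.2)

theorem index_lt_bound (P : Set L) (x : L) : S.index P x < S.bound :=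
  Order.lt_succ_iff.2 (Ordinal.le_iSup (fun q : Set L × L => S.index q.1 q.2) (P, x))

theorem mem_pieceAt (hx : x ∈ P) : x ∈ S.pieceAt x P := ⟨hx, rfl⟩

theorem pieceAt_subset (x : L) (P : Set L) : S.pieceAt x P ⊆ P := inter_subset_left

/-- Passing repeatedly to the piece containing `x` leads to `{x}` in finitely many steps. There is
no bound for the number of steps, and no well-foundedness of the tree of all pieces. -/
def Terminating : Prop :=
  ∀ x, WellFounded fun Q P : Set L => x ∈ P ∧ ¬ P.Subsingleton ∧ Q = S.pieceAt x P

variable {S}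

theorem terminating_of_measure {α : Type*} [Preorder α] [WellFoundedLT α] (μ : L → Set L → α)
    (h : ∀ P, ∀ x ∈ P, ¬ P.Subsingleton → μ x (S.pieceAt x P) < μ x P) : S.Terminating := by
  refine fun x => Subrelation.wf (r := InvImage (· < ·) (μ x)) ?_ (InvImage.wf _ wellFounded_lt)
  rintro _ P ⟨hx, hP, rfl⟩
  exact h P x hx hP

/- Split `P` according to a decomposition of minimal rank relative to the first `A n` that meets it.
Along the pieces containing a given `x ∈ A N` this first `n` increases, but at most to `N`, and
while it is constant the rank decreases. -/
theorem exists_terminating (h : SigmaScattered L) : ∃ S : Splitting L, S.Terminating := by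
  obtain ⟨A, hA, hscat⟩ := h
  let stage (P : Set L) : ℕ := sInf {n | (P ∩ A n).Nonempty}
  have hstage : ∀ P : Set L, P.Nonempty → (P ∩ A (stage P)).Nonempty := fun P ⟨x, hx⟩ => by
    obtain ⟨n, hn⟩ := mem_iUnion.1 (hA ▸ mem_univ x)
    exact Nat.sInf_mem (s := {n | (P ∩ A n).Nonempty}) ⟨n, x, hx, hn⟩
  let rank (P : Set L) : Ordinal.{u} := decompRank (A (stage P)) P
  have hsplit : ∀ P : Set L, ∃ b f, Separates b f P ∧ (¬ P.Subsingleton →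
      ∀ x ∈ P, decompRank (A (stage P)) (P ∩ f ⁻¹' {f x}) < rank P) := fun P => by
    by_cases hP : P.Subsingleton
    · exact ⟨true, 0, fun x _ y _ hxy => absurd hxy (lt_irrefl 0), fun h => absurd hP h⟩
    · obtain ⟨b, f, hf, hlt⟩ := (Decomposable.of_scattered (hscat (stage P)) P)
        |>.exists_separates_decompRank_lt hP
        (not_disjoint_iff_nonempty_inter.2 (hstage P (not_subsingleton_iff.1 hP).nonempty))
      exact ⟨b, f, hf, fun _ => hlt⟩
  choose sign index hsep hlt using hsplit
  have hcover (x : L) : ∃ n, x ∈ A n := mem_iUnion.1 (hA ▸ mem_univ x)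
  choose N hN using hcover
  let S : Splitting L := ⟨sign, index, hsep⟩
  refine ⟨S, terminating_of_measure (fun x P => toLex (N x - stage P, rank P))
    fun P x hx hP => Prod.Lex.toLex_lt_toLex.2 ?_⟩
  have hx' : x ∈ S.pieceAt x P := S.mem_pieceAt hx
  have hle : stage P ≤ stage (S.pieceAt x P) := Nat.sInf_le <|
    (hstage _ ⟨x, hx'⟩).mono (inter_subset_inter_left _ (S.pieceAt_subset x P))
  have hleN : stage (S.pieceAt x P) ≤ N x := Nat.sInf_le ⟨x, hx', hN x⟩
  rcases hle.lt_or_eq with hlt' | heq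
  · exact .inl (Nat.sub_lt_sub_left (hlt'.trans_le hleN) hlt')
  · refine .inr ⟨congrArg (N x - ·) heq.symm, ?_⟩
    change decompRank (A (stage (S.pieceAt x P))) (S.pieceAt x P) < rank P
    exact heq ▸ hlt P hP x hx

end Splitting

/-! ### Embedding split orders -/

/-- Embeddability of linear orders. -/
def Embeddable (A B : LinOrd.{u}) : Prop := Nonempty (A ↪o B)

theorem Embeddable.refl (A : LinOrd.{u}) : Embeddable A A := ⟨RelEmbedding.refl _⟩

theorem Embeddable.trans {A B C : LinOrd.{u}} (hAB : Embeddable A B) (hBC : Embeddable B C) :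
    Embeddable A C :=
  hAB.elim fun f => hBC.elim fun g => ⟨f.trans g⟩

theorem Embeddable.of_isEmpty {A B : LinOrd.{u}} [IsEmpty A] : Embeddable A B :=
  ⟨OrderEmbedding.ofIsEmpty⟩

theorem embeddable_of_subset {L : Type u} [LinearOrder L] {P Q : Set L} (h : P ⊆ Q) :
    Embeddable (.of P) (.of Q) :=
  ⟨OrderEmbedding.ofStrictMono (inclusion h) fun _ _ => id⟩

/-- The sum of the orders `X o` over `o < ℓ` embeds into `K`, where the summands are taken from left
to right for `b = true` and from right to left for `b = false`. -/
def SumEmbeds (b : Bool) (ℓ : Ordinal.{u}) (X : Ordinal.{u} → LinOrd.{u}) (K : LinOrd.{u}) : Prop :=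
  ∃ φ : ∀ o : Iio ℓ, X o ↪o K, ∀ o o', o < o' → ∀ x y, SignedLT b (φ o x) (φ o' y)

section SumEmbeds

variable {b : Bool} {ℓ ℓ' : Ordinal.{u}} {X X' : Ordinal.{u} → LinOrd.{u}} {K K' : LinOrd.{u}}

theorem SumEmbeds.trans_embeddable (h : SumEmbeds b ℓ X K) (hK : Embeddable K K') :
    SumEmbeds b ℓ X K' := by
  obtain ⟨φ, hφ⟩ := h
  obtain ⟨g⟩ := hK
  exact ⟨fun o => (φ o).trans g,
    fun o o' ho x y => (SignedLT.map_iff g.strictMono).2 (hφ o o' ho x y)⟩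

theorem SumEmbeds.reindex (h : SumEmbeds b ℓ' X' K) {f : Iio ℓ → Iio ℓ'} (hf : StrictMono f)
    (hX : ∀ o : Iio ℓ, Embeddable (X o) (X' (f o))) : SumEmbeds b ℓ X K := by
  obtain ⟨φ, hφ⟩ := h
  exact ⟨fun o => (hX o).some.trans (φ (f o)),
    fun o o' ho x y => hφ _ _ (hf ho) _ _⟩

theorem SumEmbeds.mono (h : SumEmbeds b ℓ X' K) (hX : ∀ o < ℓ, Embeddable (X o) (X' o)) :
    SumEmbeds b ℓ X K :=
  h.reindex strictMono_id fun o => hX o o.2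

end SumEmbeds

namespace Splitting

variable {L : Type u} [LinearOrder L] {S : Splitting L}

theorem sumEmbeds_piece (S : Splitting L) (P : Set L) :
    SumEmbeds (S.sign P) S.bound (fun o => .of (S.piece P o)) (.of P) := by
  refine ⟨fun o => OrderEmbedding.ofStrictMono (inclusion inter_subset_left) fun _ _ => id,
    fun o o' ho x y => ?_⟩
  have hxy : S.index P x < S.index P y := by
    rw [x.2.2, y.2.2]
    exact ho
  exact (SignedLT.map_iff (Subtype.strictMono_coe P)).1 (S.separates P x x.2.1 y y.2.1 hxy)

/- The image of `x` is found by following the pieces containing `x` until they become trivial. -/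
theorem Terminating.embeddable (hS : S.Terminating) {G : Set L → LinOrd.{u} → Prop}
    (hne : ∀ P K, G P K → P.Nonempty → Nonempty K)
    (hG : ∀ P K, G P K → ∃ X, SumEmbeds (S.sign P) S.bound X K ∧
      ∀ o < S.bound, G (S.piece P o) (X o))
    {P : Set L} {K : LinOrd.{u}} (hPK : G P K) : Embeddable (.of P) K := by
  classical
  choose X hX hXG using hG
  choose φ hφ using hX
  let step (x : L) (P : Set L) (ih : ∀ Q, x ∈ P ∧ ¬ P.Subsingleton ∧ Q = S.pieceAt x P →
      ∀ K, G Q K → x ∈ Q → K) (K : LinOrd.{u}) (h : G P K) (hx : x ∈ P) : K :=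
    if hP : P.Subsingleton then (hne P K h ⟨x, hx⟩).some
    else φ P K h ⟨S.index P x, S.index_lt_bound P x⟩
      (ih (S.pieceAt x P) ⟨hx, hP, rfl⟩ _ (hXG P K h _ (S.index_lt_bound P x)) (S.mem_pieceAt hx))
  let e (x : L) := (hS x).fix (step x)
  have he : ∀ x P K h hx (o : Iio S.bound) (ho : S.index P x = o), ¬ P.Subsingleton →
      e x P K h hx = φ P K h o (e x (S.piece P o) _ (hXG P K h o o.2) ⟨hx, ho⟩) := by
    intro x P K h hx ⟨o, ho'⟩ ho hP
    obtain rfl : S.index P x = o := ho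
    exact (congr_fun₃ ((hS x).fix_eq (step x) P) K h hx).trans (dif_neg hP)
  have hmono : ∀ x y, x < y → ∀ P K h hx hy, e x P K h hx < e y P K h hy := by
    intro x y hxy P
    induction P using (hS x).induction with
    | _ P ih =>
      intro K h hx hy
      have hP : ¬ P.Subsingleton := fun hP => hxy.ne (hP hx hy)
      let o : Iio S.bound := ⟨S.index P x, S.index_lt_bound P x⟩
      let o' : Iio S.bound := ⟨S.index P y, S.index_lt_bound P y⟩
      rcases lt_trichotomy o o' with ho | ho | ho
      · rw [he x P K h hx o rfl hP, he y P K h hy o' rfl hP]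
        exact (S.separates P x hx y hy ho).lt_of_lt (hφ P K h o o' ho _ _) hxy
      · rw [he x P K h hx o rfl hP, he y P K h hy o (congrArg Subtype.val ho).symm hP]
        exact (φ P K h o).strictMono (ih (S.pieceAt x P) ⟨hx, hP, rfl⟩ _ _ _ _)
      · rw [he x P K h hx o rfl hP, he y P K h hy o' rfl hP]
        exact (S.separates P y hy x hx ho).gt_of_gt (hφ P K h o' o ho _ _) hxy
  exact ⟨OrderEmbedding.ofStrictMono (fun x : P => e x P K hPK x.2)
    fun x y hxy => hmono x y hxy P K hPK x.2 y.2⟩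

theorem Terminating.embeddable_of_or (hS : S.Terminating) {G : Set L → LinOrd.{u} → Prop}
    (hne : ∀ P K, G P K → Nonempty K)
    (hG : ∀ P K, G P K → ∃ X, SumEmbeds (S.sign P) S.bound X K ∧
      ∀ o < S.bound, Embeddable (.of (S.piece P o)) (X o) ∨ G (S.piece P o) (X o))
    {P : Set L} {K : LinOrd.{u}} (hPK : G P K) : Embeddable (.of P) K := by
  refine hS.embeddable (G := fun P K => Embeddable (.of P) K ∨ G P K) ?_ ?_ (.inr hPK)
  · rintro P K (⟨⟨f⟩⟩ | h) ⟨x, hx⟩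
    exacts [⟨f ⟨x, hx⟩⟩, hne P K h]
  · rintro P K (h | h)
    · exact ⟨_, (S.sumEmbeds_piece P).trans_embeddable h, fun o _ => .inl (.refl _)⟩
    · exact hG P K h

end Splitting

/-! ### Coded orders -/

/-- The label `(b, a)` codes the operation of summing the orders `ord (a.entry o)` over `o < a.len`
in the direction `b`, where an entry `none` stands for the order the operation is applied to. This
says that `K` is closed under it up to embeddability. -/
def SumClosed {A : Type v} (ord : A → LinOrd.{u}) (p : Bool × OrdSeq.{u} (Option A))
    (K : LinOrd.{u}) : Prop :=
  SumEmbeds p.1 p.2.len (fun o => (p.2.entry o).elim K ord) K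

theorem Embeddable.option_elim {A : Type v} {ord : A → LinOrd.{u}} {K : LinOrd.{u}}
    {e e' : Option A} (h : Option.Rel (InvImage Embeddable ord) e e') :
    Embeddable (e.elim K ord) (e'.elim K ord) := by
  cases h with
  | some h => exact h
  | none => exact .refl K

theorem SumClosed.of_embeds {A : Type v} {ord : A → LinOrd.{u}}
    {p q : Bool × OrdSeq.{u} (Option A)} {K : LinOrd.{u}} (hq : SumClosed ord q K)
    (h₁ : p.1 = q.1) (h₂ : p.2.Embeds (Option.Rel (InvImage Embeddable ord)) q.2) :
    SumClosed ord p K := by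
  obtain ⟨φ, hmono, hφ⟩ := h₂
  unfold SumClosed
  rw [h₁]
  exact hq.reindex (f := fun o => ⟨φ o, (hφ o o.2).1⟩) (fun o o' ho => hmono o.2 o'.2 ho)
    fun o => .option_elim (hφ o o.2).2

/-- Up to embeddability, `K` is the least nonempty order closed under the labels in `Λ`. The empty
order is admitted for `K` as well. -/
def IsLeastSumClosed {A : Type v} (ord : A → LinOrd.{u}) (Λ : Set (Bool × OrdSeq.{u} (Option A)))
    (K : LinOrd.{u}) : Prop :=
  (∀ p ∈ Λ, SumClosed ord p K) ∧
    ∀ M : LinOrd.{u}, Nonempty M → (∀ p ∈ Λ, SumClosed ord p M) → Embeddable K M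

/-- `K` is least closed under labels whose entries are least closed under labels, and so on; the
well-founded tree of all these labels has rank at most `o`. -/
inductive CodeRankLE : Ordinal.{u} → LinOrd.{u} → Prop
  | mk {o o' : Ordinal.{u}} {K : LinOrd.{u}} (ho : o < o') {A : Type u}
      (ord : A → LinOrd.{u}) (hA : ∀ a, CodeRankLE o (ord a))
      {Λ : Set (Bool × OrdSeq.{u} (Option A))} (hK : IsLeastSumClosed ord Λ K) : CodeRankLE o' K

theorem CodeRankLE.mono {o o' : Ordinal.{u}} {K : LinOrd.{u}} (h : CodeRankLE o K)
    (ho : o ≤ o') : CodeRankLE o' K := by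
  obtain ⟨ho₁, ord, hA, hK⟩ := h
  exact .mk (ho₁.trans_le ho) ord hA hK

/-- A linear order generated by iterated sums, together with a bound for the rank of its code. -/
structure CodedOrder : Type (u + 1) where
  order : LinOrd.{u}
  rank : Ordinal.{u}
  codeRankLE : CodeRankLE rank order

namespace CodedOrder

instance : PartialOrder CodedOrder.{u} where
  le c d := c = d ∨ c.rank < d.rank ∧ Embeddable c.order d.order
  le_refl _ := .inl rfl
  le_trans := by
    rintro a b c (rfl | hab) (rfl | hbc)
    exacts [.inl rfl, .inr hbc, .inr hab, .inr ⟨hab.1.trans hbc.1, hab.2.trans hbc.2⟩]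
  le_antisymm := by
    rintro a b (rfl | hab) (hba | hba)
    exacts [rfl, rfl, hba.symm, absurd hab.1 hba.1.not_gt]

theorem lt_iff {c d : CodedOrder.{u}} : c < d ↔ c.rank < d.rank ∧ Embeddable c.order d.order := by
  refine ⟨?_, fun h => ⟨.inr h, ?_⟩⟩
  · rintro ⟨rfl | h, hdc⟩
    exacts [absurd (.inl rfl) hdc, h]
  · rintro (rfl | hdc)
    exacts [h.1.false, h.1.not_gt hdc.1]

instance : WellFoundedLT CodedOrder.{u} :=
  StrictMono.wellFoundedLT (f := rank) fun _ _ h => (lt_iff.1 h).1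

theorem exists_isLeastSumClosed (c : CodedOrder.{u}) :
    ∃ Λ : Set (Bool × OrdSeq.{u} (Option CodedOrder.{u})), IsLeastSumClosed order Λ c.order ∧
      ∀ p ∈ Λ, ∀ i d, p.2.entry i = some d → d.rank < c.rank := by
  obtain ⟨K, rank, ho, ord, hA, hK⟩ := c
  let code (p : Bool × OrdSeq.{u} (Option _)) : Bool × OrdSeq.{u} (Option CodedOrder.{u}) :=
    (p.1, ⟨p.2.len, fun i => (p.2.entry i).map fun a => ⟨ord a, _, hA a⟩⟩)
  have hcode : ∀ p K', SumClosed order (code p) K' ↔ SumClosed ord p K' := fun p K' => by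
    simp only [SumClosed, code, Option.elim_map, Function.comp_def]
  refine ⟨code '' _, ⟨forall_mem_image.2 fun p hp => (hcode p K).2 (hK.1 p hp), fun K' hK' h =>
    hK.2 K' hK' fun p hp => (hcode p K').1 (h _ (mem_image_of_mem code hp))⟩, ?_⟩
  rintro _ ⟨p, -, rfl⟩ i d hd
  obtain ⟨a, -, rfl⟩ := Option.map_eq_some_iff.1 hd
  exact ho

theorem exists_violated_label {c d : CodedOrder.{u}} (h : ¬ Embeddable c.order d.order)
    (hd : Nonempty d.order) :
    ∃ p : Bool × OrdSeq.{u} (Option CodedOrder.{u}), SumClosed order p c.order ∧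
      ¬ SumClosed order p d.order ∧ ∀ i < p.2.len, ∀ e, p.2.entry i = some e → e < c := by
  obtain ⟨Λ, hΛ, hrank⟩ := c.exists_isLeastSumClosed
  obtain ⟨p, hp, hpd⟩ : ∃ p ∈ Λ, ¬ SumClosed order p d.order := by
    by_contra! hcon
    exact h (hΛ.2 d.order hd hcon)
  refine ⟨p, hΛ.1 p hp, hpd, fun i hi e he => lt_iff.2 ⟨hrank p hp i e he, ?_⟩⟩
  obtain ⟨φ, -⟩ := hΛ.1 p hp
  have hφ : Embeddable ((p.2.entry i).elim c.order order) c.order := ⟨φ ⟨i, hi⟩⟩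
  rwa [he] at hφ

/- In a minimal bad array, a label of each term that the next term is not closed under gives a bad
array of labels, hence one of entries of these labels, which contradicts minimality. -/
theorem isBQO_embeddable : IsBQO (InvImage Embeddable order.{u}) := by
  refine ⟨fun F₀ => ?_⟩
  obtain ⟨F, -, hmin⟩ := BadArray.exists_minimal (r := InvImage Embeddable order)
    (fun _ _ _ h hbc => Embeddable.trans h (lt_iff.1 hbc).2) F₀
  have hne : ∀ X ∈ infSubsets F.dom, Nonempty (F X).order := fun X hX => by
    by_contra hempty
    have := not_nonempty_iff.1 hempty
    exact F.not_rel_tail X hX .of_isEmpty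
  have hlabel : ∀ c d : CodedOrder.{u}, ¬ Embeddable c.order d.order → Nonempty d.order →
      ∃ p : Bool × OrdSeq.{u} (Option CodedOrder.{u}), SumClosed order p c.order ∧
        ¬ SumClosed order p d.order ∧ ∀ i < p.2.len, ∀ e, p.2.entry i = some e → e < c :=
    fun _ _ => exists_violated_label
  have : Nonempty (Bool × OrdSeq.{u} (Option CodedOrder.{u})) := ⟨true, ⟨0, fun _ => none⟩⟩
  choose! label hclosed hviol hlt using hlabel
  let G : BadArray fun p q : Bool × OrdSeq.{u} (Option CodedOrder.{u}) =>
      p.1 = q.1 ∧ p.2.Embeds (Option.Rel (InvImage Embeddable order)) q.2 :=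
    ⟨F.dom, fun X => label (F X) (F (tail X)), F.infinite,
      F.locallyConstantOn.map₂ label F.locallyConstantOn.comp_tail,
      fun X hX hP => hviol _ _ (F.not_rel_tail X hX) (hne _ (tail_mem_infSubsets hX))
        ((hclosed _ _ (F.not_rel_tail _ (tail_mem_infSubsets hX))
          (hne _ (tail_mem_infSubsets (tail_mem_infSubsets hX)))).of_embeds hP.1 hP.2)⟩
  have hG : G.Below (fun p c => ∀ i < p.2.len, ∀ e, p.2.entry i = some e → e < c) F :=
    ⟨Subset.rfl, fun X hX => hlt _ _ (F.not_rel_tail X hX) (hne _ (tail_mem_infSubsets hX))⟩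
  obtain ⟨G₁, hG₁⟩ := G.exists_below_snd
  obtain ⟨G₂, hG₂⟩ := OrdSeq.exists_below_entry G₁
  obtain ⟨G₃, hG₃⟩ := G₂.exists_below_some
  have hG₂' : G₂.Below (fun e c => ∀ d, e = some d → d < c) F := by
    refine (hG₂.trans hG₁ (R'' := fun e p => ∃ i < p.2.len, p.2.entry i = e) ?_).trans hG ?_
    · rintro e _ p ⟨i, hi, he⟩ rfl
      exact ⟨i, hi, he⟩
    · rintro _ p c ⟨i, hi, rfl⟩ h
      exact h i hi
  exact hmin G₃ (hG₃.trans hG₂' fun d _ c hd h => h d hd)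

end CodedOrder

/-! ### Split orders are coded -/

/-- `K` has a code. -/
def IsCoded (K : LinOrd.{u}) : Prop := ∃ o, CodeRankLE o K

theorem IsCoded.of_isLeastSumClosed {A : Type u} {ord : A → LinOrd.{u}}
    (hA : ∀ a, IsCoded (ord a)) {Λ : Set (Bool × OrdSeq.{u} (Option A))} {K : LinOrd.{u}}
    (hK : IsLeastSumClosed ord Λ K) : IsCoded K := by
  choose rank hrank using hA
  exact ⟨Order.succ (⨆ a, rank a), .mk (Order.lt_succ _) ord
    (fun a => (hrank a).mono (Ordinal.le_iSup rank a)) hK⟩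

theorem IsCoded.of_subsingleton {K : LinOrd.{u}} [Subsingleton K] : IsCoded K :=
  .of_isLeastSumClosed (A := PEmpty) (ord := PEmpty.elim) (Λ := ∅) (fun a => a.elim)
    ⟨fun _ h => h.elim, fun _ ⟨y⟩ _ => ⟨OrderEmbedding.ofStrictMono (fun _ => y)
      fun a b hab => absurd (Subsingleton.elim a b) hab.ne⟩⟩

theorem exists_forall_reachable_rel {α : Type*} {r : α → α → Prop} (hr : WellQuasiOrdered r)
    (T : α → α → Prop) (a : α) :
    ∃ a', Relation.ReflTransGen T a a' ∧ ∀ b c, Relation.ReflTransGen T a' b →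
      Relation.ReflTransGen T a' c → ∃ d, Relation.ReflTransGen T b d ∧ r c d := by
  by_contra! hcon
  obtain ⟨f, -, -, hf⟩ := exists_seq_of_forall_exists (P := Relation.ReflTransGen T a)
    (R := fun a b => Relation.ReflTransGen T a b ∧ ∃ c, Relation.ReflTransGen T a c ∧
      ∀ d, Relation.ReflTransGen T b d → ¬ r c d) .refl fun a' ha' => by
    obtain ⟨b, c, hb, hc, hbc⟩ := hcon a' ha'
    exact ⟨b, ha'.trans hb, hb, c, hc, hbc⟩
  choose hreach c hc hbad using hf
  obtain ⟨m, n, hmn, hrel⟩ := hr c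
  exact hbad m (c n) ((Nat.rel_of_forall_rel_succ_of_le _ hreach (Nat.succ_le_of_lt hmn)).trans
    (hc n)) hrel

namespace Splitting

variable {L : Type u} [LinearOrder L] {S : Splitting L} {P Q : Set L} {o : Ordinal.{u}}

open Classical in
/-- The label of the sum of the pieces of `P`, where all pieces without a code are replaced by the
placeholder `none`. -/
noncomputable def label (S : Splitting L) (P : Set L) :
    Bool × OrdSeq.{u} (Option {Q : Set L // IsCoded (.of Q)}) :=
  (S.sign P, ⟨S.bound, fun o => if h : IsCoded (.of (S.piece P o)) then some ⟨_, h⟩ else none⟩)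

theorem label_entry_of_isCoded (h : IsCoded (.of (S.piece P o))) :
    (S.label P).2.entry o = some ⟨_, h⟩ := dif_pos h

theorem label_entry_of_not_isCoded (h : ¬ IsCoded (.of (S.piece P o))) :
    (S.label P).2.entry o = none := dif_neg h

/-- Comparison of the labels of `P` and `Q`: every order closed under the label of `Q` is closed
under that of `P`, as in `SumClosed.of_embeds`. -/
def LabelLE (S : Splitting L) (P Q : Set L) : Prop :=
  (S.label P).1 = (S.label Q).1 ∧
    (S.label P).2.Embeds (Option.Rel (InvImage Embeddable fun R => .of R.1)) (S.label Q).2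

theorem wellQuasiOrdered_labelLE (S : Splitting L) : WellQuasiOrdered S.LabelLE := fun f =>
  (CodedOrder.isBQO_embeddable.comap fun Q : {Q : Set L // IsCoded (.of Q)} =>
    ⟨.of Q.1, _, Q.2.choose_spec⟩).option.ordSeq.prod_finite.wellQuasiOrdered fun n => S.label (f n)

/-- `V` contains all pieces of its members that have no code. -/
def ClosedUnderPieces (S : Splitting L) (V : Set (Set L)) : Prop :=
  ∀ P ∈ V, ∀ o, ¬ IsCoded (.of (S.piece P o)) → S.piece P o ∈ V

variable {V : Set (Set L)}

theorem LabelLE.exists_sumEmbeds (h : S.LabelLE P Q) (hV : S.ClosedUnderPieces V) (hP : P ∈ V)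
    (hQ : Q ∈ V) : ∃ R : Ordinal.{u} → Set L,
      SumEmbeds (S.sign P) S.bound (fun o => .of (R o)) (.of Q) ∧ ∀ o < S.bound,
        Embeddable (.of (S.piece P o)) (.of (R o)) ∨ S.piece P o ∈ V ∧ R o ∈ V := by
  obtain ⟨hsign, φ, hmono, hφ⟩ := h
  refine ⟨fun o => S.piece Q (φ o), ?_, fun o ho => ?_⟩
  · rw [show S.sign P = S.sign Q from hsign]
    exact (S.sumEmbeds_piece Q).reindex (f := fun o => ⟨φ o, (hφ o o.2).1⟩)
      (fun o o' ho => hmono o.2 o'.2 ho) fun o => .refl _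
  · have hrel := (hφ o ho).2
    by_cases hPo : IsCoded (.of (S.piece P o)) <;>
      by_cases hQo : IsCoded (.of (S.piece Q (φ o)))
    · rw [label_entry_of_isCoded hPo, label_entry_of_isCoded hQo] at hrel
      cases hrel with
      | some h => exact .inl h
    · rw [label_entry_of_isCoded hPo, label_entry_of_not_isCoded hQo] at hrel
      cases hrel
    · rw [label_entry_of_not_isCoded hPo, label_entry_of_isCoded hQo] at hrel
      cases hrel
    · exact .inr ⟨hV P hP o hPo, hV Q hQ _ hQo⟩

theorem Terminating.embeddable_of_labelLE (hS : S.Terminating) (hV : S.ClosedUnderPieces V)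
    (hne : ∀ P ∈ V, P.Nonempty) (hle : ∀ P ∈ V, ∀ Q ∈ V, ∃ R ∈ V, R ⊆ Q ∧ S.LabelLE P R)
    (hP : P ∈ V) (hQ : Q ∈ V) : Embeddable (.of P) (.of Q) := by
  refine hS.embeddable_of_or (G := fun P K => P ∈ V ∧ ∃ Q ∈ V, K = .of Q) ?_ ?_
    ⟨hP, Q, hQ, rfl⟩
  · rintro _ _ ⟨-, Q, hQ, rfl⟩
    exact (hne Q hQ).to_subtype
  · rintro P _ ⟨hP, Q, hQ, rfl⟩
    obtain ⟨R, hR, hRQ, hPR⟩ := hle P hP Q hQ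
    obtain ⟨X, hsum, hX⟩ := hPR.exists_sumEmbeds hV hP hR
    exact ⟨_, hsum.trans_embeddable (embeddable_of_subset hRQ), fun o ho =>
      (hX o ho).imp_right fun h => ⟨h.1, X o, h.2, rfl⟩⟩

theorem Terminating.embeddable_of_sumClosed (hS : S.Terminating) (hV : S.ClosedUnderPieces V)
    {K : LinOrd.{u}} (hK : Nonempty K)
    (hclosed : ∀ P ∈ V, SumClosed (fun R => .of R.1) (S.label P) K) (hP : P ∈ V) :
    Embeddable (.of P) K := by
  refine hS.embeddable_of_or (G := fun P K' => P ∈ V ∧ K' = K) ?_ ?_ ⟨hP, rfl⟩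
  · rintro _ _ ⟨-, rfl⟩
    exact hK
  · rintro P _ ⟨hP, rfl⟩
    refine ⟨_, hclosed P hP, fun o _ => ?_⟩
    by_cases ho : IsCoded (.of (S.piece P o))
    · rw [label_entry_of_isCoded ho]
      exact .inl (.refl _)
    · rw [label_entry_of_not_isCoded ho]
      exact .inr ⟨hV P hP o ho, rfl⟩

theorem sumClosed_label (hP : P ⊆ Q)
    (h : ∀ o, ¬ IsCoded (.of (S.piece P o)) → Embeddable (.of Q) (.of (S.piece P o))) :
    SumClosed (fun R => .of R.1) (S.label P) (.of Q) := by
  refine ((S.sumEmbeds_piece P).trans_embeddable (embeddable_of_subset hP)).mono fun o _ => ?_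
  by_cases ho : IsCoded (.of (S.piece P o))
  · rw [label_entry_of_isCoded ho]
    exact .refl _
  · rw [label_entry_of_not_isCoded ho]
    exact h o ho

/- Among the uncoded sets reachable from `P` choose `P₀` from which the same labels remain reachable
forever. All sets reachable from it embed into each other, and `P₀` is least closed under their
labels. -/
theorem Terminating.isCoded (hS : S.Terminating) (P : Set L) : IsCoded (.of P) := by
  by_contra hP
  let T (P Q : Set L) : Prop := ¬ IsCoded (.of Q) ∧ ∃ o, Q = S.piece P o
  have hT_subset : ∀ P Q, Relation.ReflTransGen T P Q → Q ⊆ P := fun P Q h => by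
    induction h with
    | refl => exact Subset.rfl
    | tail _ hQ ih =>
      obtain ⟨-, o, rfl⟩ := hQ
      exact inter_subset_left.trans ih
  obtain ⟨P₀, hPP₀, hle⟩ := exists_forall_reachable_rel S.wellQuasiOrdered_labelLE T P
  let V : Set (Set L) := {Q | Relation.ReflTransGen T P₀ Q}
  have hV : S.ClosedUnderPieces V := fun Q hQ o ho => hQ.tail ⟨ho, o, rfl⟩
  have huncoded : ∀ Q, Relation.ReflTransGen T P Q → ¬ IsCoded (.of Q) := fun Q hQ => by
    obtain rfl | ⟨_, -, hQ⟩ := hQ.cases_tail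
    exacts [hP, hQ.1]
  have hne : ∀ Q ∈ V, Q.Nonempty := fun Q hQ => by
    by_contra hempty
    have : IsEmpty Q := isEmpty_coe_sort.2 (not_nonempty_iff_eq_empty.1 hempty)
    exact huncoded Q (hPP₀.trans hQ) .of_subsingleton
  have hle' : ∀ Q ∈ V, ∀ R ∈ V, ∃ R' ∈ V, R' ⊆ R ∧ S.LabelLE Q R' := fun Q hQ R hR => by
    obtain ⟨R', hR', hQR'⟩ := hle R Q hR hQ
    exact ⟨R', hR.trans hR', hT_subset R R' hR', hQR'⟩
  have hclosed : ∀ Q ∈ V, SumClosed (fun R => .of R.1) (S.label Q) (.of P₀) := fun Q hQ =>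
    sumClosed_label (hT_subset P₀ Q hQ) fun o ho =>
      hS.embeddable_of_labelLE hV hne hle' .refl (hV Q hQ o ho)
  exact huncoded P₀ hPP₀ <| .of_isLeastSumClosed (fun R => R.2) (Λ := S.label '' V)
    ⟨forall_mem_image.2 hclosed, fun K hK h =>
      hS.embeddable_of_sumClosed hV hK (forall_mem_image.1 h) .refl⟩

end Splitting

theorem isCoded_of_sigmaScattered {L : Type u} [LinearOrder L] (h : SigmaScattered L) :
    IsCoded (.of (univ : Set L)) :=
  have ⟨_, hS⟩ := Splitting.exists_terminating h
  hS.isCoded univ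

theorem wellQuasiOrdered_embeddable :
    WellQuasiOrdered fun A B : {K : LinOrd.{u} // IsCoded K} => Embeddable A.1 B.1 :=
  (CodedOrder.isBQO_embeddable.comap fun K : {K : LinOrd.{u} // IsCoded K} =>
    ⟨K.1, _, K.2.choose_spec⟩).wellQuasiOrdered

end Laver

/-- The class of σ-scattered linear orders is well quasi-ordered by embeddability. -/
theorem sigma_scattered_wqo (L : ℕ → Type*) [∀ i, LinearOrder (L i)]
    (h : ∀ i, SigmaScattered (L i)) :
    ∃ i j : ℕ, i < j ∧ Nonempty (L i ↪o L j) := by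
  obtain ⟨i, j, hij, ⟨f⟩⟩ := Laver.wellQuasiOrdered_embeddable fun i =>
    ⟨_, Laver.isCoded_of_sigmaScattered (h i)⟩
  exact ⟨i, j, hij, ⟨OrderIso.Set.univ.symm.toOrderEmbedding.trans
    (f.trans OrderIso.Set.univ.toOrderEmbedding)⟩⟩
end

section
/- The countable linear orders are well quasi-ordered by embeddability: for every sequence ⟨L_i : i ∈ ℕ⟩ of countable linear orders there exist indices i < j such that L_i order-embeds into L_j. -/
/-!
A countable order either contains a copy of `ℚ`, and then every countable order embeds in it, or
it is built from points by sums of types `ω` and `ω*`. In such a sum each term may be assumed to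
embed in infinitely many others, apart from finitely many terms, so the orders of the second kind
are finite sums of orders coded by well-founded trees, with finitely many labels, in such a way
that an embedding of trees induces an embedding of orders. Higman's lemma then reduces the theorem
to Nash-Williams' theorem that these trees are well quasi-ordered.

For trees, a bad sequence `x` is refined by descent: along an increasing index sequence `y`, the
tree `x (y 0)` is repeatedly replaced by a child that embeds in no child of the tree obtained from
the shift of `y`. This descent settles after finitely many stages. The label of the final tree is a
Borel function of `y`, so the Galvin-Prikry theorem makes it constant, and then each shift of `y`
strictly decreases the settling time.
-/

open Set Filter MeasureTheory

/-! ### Completely Ramsey sets -/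

section Ellentuck

variable {s t : Finset ℕ} {A B : Set ℕ} {𝒳 : Set (Set ℕ)}

/-- The elements of `A` that lie above every element of `s`. -/
def tailAbove (s : Finset ℕ) (A : Set ℕ) : Set ℕ := {a ∈ A | ∀ i ∈ s, i < a}

/-- The basic Ellentuck neighbourhood `[s, A]`: the infinite sets with initial segment `s` whose
remaining elements are taken from `A`. -/
def ellentuck (s : Finset ℕ) (A : Set ℕ) : Set (Set ℕ) :=
  {X | X.Infinite ∧ ↑s ⊆ X ∧ X \ ↑s ⊆ tailAbove s A}

/-- A set of infinite sets is completely Ramsey if every Ellentuck neighbourhood `[s, A]` can be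
shrunk to some `[s, B]` lying inside the set or inside its complement. -/
def CompletelyRamsey (𝒳 : Set (Set ℕ)) : Prop :=
  ∀ (s : Finset ℕ) (A : Set ℕ), A.Infinite →
    ∃ B ⊆ A, B.Infinite ∧ (ellentuck s B ⊆ 𝒳 ∨ ellentuck s B ⊆ 𝒳ᶜ)

/-- In the accept-reject dichotomy for `𝒳`, the set `A` rejects `s` if no infinite subset `B` of
`A` satisfies `[s, B] ⊆ 𝒳`. -/
def Rejects (𝒳 : Set (Set ℕ)) (s : Finset ℕ) (A : Set ℕ) : Prop :=
  ∀ B ⊆ A, B.Infinite → ¬ellentuck s B ⊆ 𝒳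

theorem tailAbove_subset : tailAbove s A ⊆ A := sep_subset _ _

theorem tailAbove_mono (h : A ⊆ B) : tailAbove s A ⊆ tailAbove s B := fun _ ha ↦ ⟨h ha.1, ha.2⟩

theorem tailAbove_infinite (s : Finset ℕ) (hA : A.Infinite) : (tailAbove s A).Infinite := by
  refine (hA.sdiff (finite_Iic (s.sup id))).mono fun a ha ↦ ⟨ha.1, fun i hi ↦ ?_⟩
  exact (Finset.le_sup (f := id) hi).trans_lt (not_le.mp ha.2)

theorem ellentuck_subset_of_tailAbove_subset (h : tailAbove s A ⊆ B) :
    ellentuck s A ⊆ ellentuck s B :=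
  fun _ hX ↦ ⟨hX.1, hX.2.1, fun _ hx ↦ ⟨h (hX.2.2 hx), (hX.2.2 hx).2⟩⟩

theorem ellentuck_mono (h : A ⊆ B) : ellentuck s A ⊆ ellentuck s B :=
  ellentuck_subset_of_tailAbove_subset (tailAbove_subset.trans h)

theorem Rejects.of_tailAbove_subset (hA : Rejects 𝒳 s A) (h : tailAbove s B ⊆ A) :
    Rejects 𝒳 s B := fun C hCB hC hX ↦
  hA (tailAbove s C) ((tailAbove_mono hCB).trans h) (tailAbove_infinite s hC)
    ((ellentuck_mono tailAbove_subset).trans hX)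

theorem exists_subset_forall_mem_finset {Φ : Finset ℕ → Set ℕ → Prop}
    (hered : ∀ s A B, tailAbove s B ⊆ A → Φ s A → Φ s B)
    (dense : ∀ s A, A.Infinite → ∃ B ⊆ A, B.Infinite ∧ Φ s B)
    (S : Finset (Finset ℕ)) (hA : A.Infinite) :
    ∃ B ⊆ A, B.Infinite ∧ ∀ s ∈ S, Φ s B := by
  classical
  induction S using Finset.induction_on with
  | empty => exact ⟨A, Subset.rfl, hA, by simp⟩
  | insert s S _ ih =>
    obtain ⟨B, hBA, hB, hΦB⟩ := ih
    obtain ⟨C, hCB, hC, hΦC⟩ := dense s B hB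
    refine ⟨C, hCB.trans hBA, hC, Finset.forall_mem_insert _ _ _ |>.mpr ⟨hΦC, fun t ht ↦ ?_⟩⟩
    exact hered t B C (tailAbove_subset.trans hCB) (hΦB t ht)

theorem exists_forall_subset_range {Φ : Finset ℕ → Set ℕ → Prop}
    (hered : ∀ s A B, tailAbove s B ⊆ A → Φ s A → Φ s B)
    (dense : ∀ s A, A.Infinite → ∃ B ⊆ A, B.Infinite ∧ Φ s B)
    (s : Finset ℕ) (hA : A.Infinite) (n : ℕ) :
    ∃ B ⊆ A ∩ Ioi n, B.Infinite ∧ ∀ t ⊆ Finset.range (n + 1), Φ (s ∪ t) B := by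
  have hA_above : (A ∩ Ioi n).Infinite := by
    simpa only [sdiff_eq, compl_Iic] using hA.sdiff (finite_Iic n)
  obtain ⟨B, hBA, hB, hΦ⟩ := exists_subset_forall_mem_finset hered dense
    ((Finset.range (n + 1)).powerset.image (s ∪ ·)) hA_above
  exact ⟨B, hBA, hB, fun t ht ↦ hΦ _ (Finset.mem_image_of_mem _ (Finset.mem_powerset.mpr ht))⟩

/- The set `B` is enumerated by taking minima of a decreasing sequence of sets, each of which
satisfies `Φ` for the finitely many finite sets built from the minima already chosen. -/
theorem exists_fusion {Φ : Finset ℕ → Set ℕ → Prop}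
    (hered : ∀ s A B, tailAbove s B ⊆ A → Φ s A → Φ s B)
    (dense : ∀ s A, A.Infinite → ∃ B ⊆ A, B.Infinite ∧ Φ s B)
    (s : Finset ℕ) (hA : A.Infinite) :
    ∃ B ⊆ tailAbove s A, B.Infinite ∧ ∀ t : Finset ℕ, ↑t ⊆ B → Φ (s ∪ t) B := by
  choose! next next_subset next_infinite next_Φ using fun C (hC : C.Infinite) ↦
    exists_forall_subset_range hered dense s hC (sInf C)
  obtain ⟨C, hCA, hC, hΦC⟩ := dense s _ (tailAbove_infinite s hA)
  let S : ℕ → Set ℕ := fun n ↦ next^[n] C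
  have S_succ (n : ℕ) : S (n + 1) = next (S n) := Function.iterate_succ_apply' next n _
  have S_infinite (n : ℕ) : (S n).Infinite := by
    induction n with
    | zero => exact hC
    | succ n ih => rw [S_succ]; exact next_infinite _ ih
  have S_anti : Antitone S := antitone_nat_of_succ_le fun n ↦ by
    rw [S_succ]
    exact (next_subset _ (S_infinite n)).trans inter_subset_left
  let a : ℕ → ℕ := fun n ↦ sInf (S n)
  have a_mem (n : ℕ) : a n ∈ S n := Nat.sInf_mem (S_infinite n).nonempty
  have a_mono : StrictMono a := strictMono_nat_of_lt_succ fun n ↦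
    (next_subset _ (S_infinite n) (S_succ n ▸ a_mem (n + 1))).2
  have a_mem_C (n : ℕ) : a n ∈ C := S_anti (Nat.zero_le n) (a_mem n)
  refine ⟨range a, range_subset_iff.mpr fun n ↦ hCA (a_mem_C n),
    infinite_range_of_injective a_mono.injective, fun t ht ↦ ?_⟩
  obtain rfl | hne := t.eq_empty_or_nonempty
  · rw [Finset.union_empty]
    exact hered s C _ (tailAbove_subset.trans (range_subset_iff.mpr a_mem_C)) hΦC
  obtain ⟨n, hn⟩ := ht (t.max'_mem hne)
  have ht_range : t ⊆ Finset.range (a n + 1) := fun i hi ↦ by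
    rw [Finset.mem_range, Nat.lt_succ_iff, hn]
    exact t.le_max' i hi
  refine hered _ _ _ ?_ (next_Φ _ (S_infinite n) t ht_range)
  rintro _ ⟨⟨m, rfl⟩, hm⟩
  have hnm : n < m := a_mono.lt_iff_lt.mp <| hm _ <|
    Finset.mem_union_right s (hn ▸ t.max'_mem hne)
  rw [← S_succ]
  exact S_anti hnm (a_mem m)

theorem mem_ellentuck_union {X : Set ℕ} (hX : X ∈ ellentuck s A) (htX : ↑t ⊆ X)
    (ht : ∀ x ∈ X, x ∉ s → x ∉ t → ∀ i ∈ t, i < x) : X ∈ ellentuck (s ∪ t) A := by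
  obtain ⟨hinf, hsX, hXA⟩ := hX
  refine ⟨hinf, by rw [Finset.coe_union]; exact union_subset hsX htX, fun x hx ↦ ?_⟩
  rw [Finset.coe_union, Set.mem_sdiff, mem_union, not_or] at hx
  have hxA := hXA ⟨hx.1, hx.2.1⟩
  refine ⟨hxA.1, fun i hi ↦ ?_⟩
  exact (Finset.mem_union.mp hi).elim (hxA.2 i) (ht x hx.1 hx.2.1 hx.2.2 i)

theorem Rejects.finite_accepts_insert (hA : Rejects 𝒳 s A) :
    {a ∈ tailAbove s A | ellentuck (s ∪ {a}) A ⊆ 𝒳}.Finite := by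
  by_contra hE
  refine hA _ (fun a ha ↦ ha.1.1) hE fun X hX ↦ ?_
  have hmem := Nat.sInf_mem (hX.1.sdiff s.finite_toSet).nonempty
  refine (hX.2.2 hmem).1.2 (mem_ellentuck_union
    (ellentuck_mono (fun a ha ↦ ha.1.1) hX) (by simpa using hmem.1) fun x hxX hxs hx i hi ↦ ?_)
  obtain rfl := Finset.mem_singleton.mp hi
  exact lt_of_le_of_ne (Nat.sInf_le ⟨hxX, hxs⟩) fun h ↦ hx (h ▸ Finset.mem_singleton_self _)

theorem exists_forall_accepts_or_rejects (𝒳 : Set (Set ℕ)) (s : Finset ℕ) (hA : A.Infinite) :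
    ∃ B ⊆ tailAbove s A, B.Infinite ∧
      ∀ t : Finset ℕ, ↑t ⊆ B → ellentuck (s ∪ t) B ⊆ 𝒳 ∨ Rejects 𝒳 (s ∪ t) B := by
  refine exists_fusion (Φ := fun s A ↦ ellentuck s A ⊆ 𝒳 ∨ Rejects 𝒳 s A)
    (fun s A B hBA h ↦ ?_) (fun s A hA ↦ ?_) s hA
  · exact h.imp (ellentuck_subset_of_tailAbove_subset hBA).trans
      fun hrej ↦ hrej.of_tailAbove_subset hBA
  by_cases h : ∃ B ⊆ A, B.Infinite ∧ ellentuck s B ⊆ 𝒳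
  · obtain ⟨B, hBA, hB, hX⟩ := h
    exact ⟨B, hBA, hB, .inl hX⟩
  · exact ⟨A, Subset.rfl, hA, .inr fun B hBA hB hX ↦ h ⟨B, hBA, hB, hX⟩⟩

theorem Rejects.exists_forall_rejects (hrej : Rejects 𝒳 s A) (hA : A.Infinite)
    (hdec : ∀ t : Finset ℕ, ↑t ⊆ A → ellentuck (s ∪ t) A ⊆ 𝒳 ∨ Rejects 𝒳 (s ∪ t) A) :
    ∃ B ⊆ A, B.Infinite ∧ ∀ t : Finset ℕ, ↑t ⊆ B → Rejects 𝒳 (s ∪ t) B := by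
  obtain ⟨B, hBA_tail, hB, hB_insert⟩ : ∃ B ⊆ tailAbove s A, B.Infinite ∧ ∀ t : Finset ℕ, ↑t ⊆ B →
      Rejects 𝒳 (s ∪ t) A → ∀ b ∈ tailAbove (s ∪ t) B, b ∈ A → ¬ellentuck (s ∪ t ∪ {b}) A ⊆ 𝒳 := by
    refine exists_fusion (Φ := fun s B ↦ Rejects 𝒳 s A →
      ∀ b ∈ tailAbove s B, b ∈ A → ¬ellentuck (s ∪ {b}) A ⊆ 𝒳)
      (fun s B C hCB h hrej c hc ↦ h hrej c ⟨hCB hc, hc.2⟩) (fun s B hB ↦ ?_) s hA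
    by_cases hrej : Rejects 𝒳 s A
    · exact ⟨B \ _, sdiff_subset, hB.sdiff hrej.finite_accepts_insert,
        fun _ b hb hbA hX ↦ hb.1.2 ⟨⟨hbA, hb.2⟩, hX⟩⟩
    · exact ⟨B, Subset.rfl, hB, fun h ↦ absurd h hrej⟩
  have hBA : B ⊆ A := hBA_tail.trans tailAbove_subset
  have hrej_A (t : Finset ℕ) : ↑t ⊆ B → Rejects 𝒳 (s ∪ t) A := by
    induction t using Finset.induction_on_max with
    | empty => simpa using hrej
    | insert b t hbt ih =>
      intro ht
      rw [Finset.coe_insert, insert_subset_iff] at ht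
      have hb_tail : b ∈ tailAbove (s ∪ t) B :=
        ⟨ht.1, fun i hi ↦ (Finset.mem_union.mp hi).elim ((hBA_tail ht.1).2 i) (hbt i)⟩
      have hunion : s ∪ insert b t = s ∪ t ∪ {b} := by
        rw [Finset.union_assoc, Finset.union_comm t, Finset.insert_eq]
      refine (hdec (insert b t) ?_).resolve_left ?_
      · rw [Finset.coe_insert]
        exact insert_subset (hBA ht.1) (ht.2.trans hBA)
      · rw [hunion]
        exact hB_insert t ht.2 (ih ht.2) b hb_tail (hBA ht.1)
  exact ⟨B, hBA, hB, fun t ht ↦ (hrej_A t ht).of_tailAbove_subset (tailAbove_subset.trans hBA)⟩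

theorem exists_accepts_or_forall_rejects (𝒳 : Set (Set ℕ)) (s : Finset ℕ) (hA : A.Infinite) :
    ∃ B ⊆ A, B.Infinite ∧
      (ellentuck s B ⊆ 𝒳 ∨ ∀ t : Finset ℕ, ↑t ⊆ B → Rejects 𝒳 (s ∪ t) B) := by
  obtain ⟨D, hDA, hD, hdec⟩ := exists_forall_accepts_or_rejects 𝒳 s hA
  have hDA' := hDA.trans tailAbove_subset
  obtain hacc | hrej : ellentuck s D ⊆ 𝒳 ∨ Rejects 𝒳 s D := by simpa using hdec ∅ (by simp)
  · exact ⟨D, hDA', hD, .inl hacc⟩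
  · obtain ⟨B, hBD, hB, hB_rej⟩ := hrej.exists_forall_rejects hD hdec
    exact ⟨B, hBD.trans hDA', hB, .inr hB_rej⟩

theorem exists_initial_finset (hA : A.Infinite) (n : ℕ) :
    ∃ t : Finset ℕ, ↑t ⊆ A ∧ t.card = n ∧ ∀ a ∈ A, a ∉ t → ∀ i ∈ t, i < a := by
  classical
  refine ⟨{i ∈ Finset.range (Nat.nth (· ∈ A) n) | i ∈ A}, ?_, ?_, ?_⟩
  · intro i hi
    exact (Finset.mem_filter.mp hi).2
  · rw [← Nat.count_eq_card_filter_range (· ∈ A)]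
    exact Nat.count_nth_of_infinite (p := (· ∈ A)) hA n
  · intro a ha hat i hi
    simp only [Finset.mem_filter, Finset.mem_range, not_and] at hat hi
    exact hi.1.trans_le (not_lt.mp fun h ↦ hat h ha)

theorem CompletelyRamsey.compl (h : CompletelyRamsey 𝒳) : CompletelyRamsey 𝒳ᶜ := fun s A hA ↦ by
  obtain ⟨B, hBA, hB, hX⟩ := h s A hA
  exact ⟨B, hBA, hB, by rwa [compl_compl, or_comm]⟩

theorem CompletelyRamsey.empty : CompletelyRamsey ∅ :=
  fun _ A hA ↦ ⟨A, Subset.rfl, hA, .inr (by simp)⟩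

/- Fusion makes `[s ∪ t, D]` decide the `n`-th set whenever `s ∪ t` has `Nat.pair n k` elements for
some `k`. As every `n` is served by arbitrarily large cardinalities, a member of the `n`-th set in
`[s, D]` yields such a `t` for which `[s ∪ t, D]` is contained in the `n`-th set. -/
theorem CompletelyRamsey.iUnion {𝒳 : ℕ → Set (Set ℕ)} (h : ∀ n, CompletelyRamsey (𝒳 n)) :
    CompletelyRamsey (⋃ n, 𝒳 n) := by
  intro s A hA
  obtain ⟨D, hDA, hD, hdec⟩ := exists_fusion
    (Φ := fun s A ↦ ellentuck s A ⊆ 𝒳 s.card.unpair.1 ∨ ellentuck s A ⊆ (𝒳 s.card.unpair.1)ᶜ)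
    (fun s A B hBA h ↦ have hsub := ellentuck_subset_of_tailAbove_subset hBA
      h.imp hsub.trans hsub.trans)
    (fun s A hA ↦ h _ s A hA) s hA
  obtain ⟨B, hBD, hB, hacc | hrej⟩ := exists_accepts_or_forall_rejects (⋃ n, 𝒳 n) s hD
  · exact ⟨B, hBD.trans (hDA.trans tailAbove_subset), hB, .inl hacc⟩
  refine ⟨B, hBD.trans (hDA.trans tailAbove_subset), hB, .inr fun X hX hmem ↦ ?_⟩
  obtain ⟨n, hXn⟩ := mem_iUnion.mp hmem
  obtain ⟨t, htX, ht_card, ht_initial⟩ :=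
    exists_initial_finset (hX.1.sdiff s.finite_toSet) (Nat.pair n s.card - s.card)
  have htB : ↑t ⊆ B := fun i hi ↦ (hX.2.2 (htX hi)).1
  have hcard : (s ∪ t).card = Nat.pair n s.card := by
    rw [Finset.card_union_of_disjoint, ht_card, Nat.add_sub_cancel' (Nat.right_le_pair _ _)]
    exact Finset.disjoint_right.mpr fun i hi ↦ (htX hi).2
  have hXt : X ∈ ellentuck (s ∪ t) B :=
    mem_ellentuck_union hX (htX.trans sdiff_subset) fun x hxX hxs ↦ ht_initial x ⟨hxX, hxs⟩
  have hDt := hdec t (htB.trans hBD)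
  simp only [hcard, Nat.unpair_pair] at hDt
  obtain hin | hout := hDt
  · exact hrej t htB B Subset.rfl hB
      ((ellentuck_mono hBD).trans (hin.trans (subset_iUnion 𝒳 n)))
  · exact hout (ellentuck_mono hBD hXt) hXn

/-- The σ-algebra of completely Ramsey sets. -/
abbrev ramseyAlgebra : MeasurableSpace (Set ℕ) where
  MeasurableSet' := CompletelyRamsey
  measurableSet_empty := .empty
  measurableSet_compl _ := .compl
  measurableSet_iUnion _ := .iUnion

end Ellentuck

section GalvinPrikry

theorem nth_mem_eq_iff {X : Set ℕ} [DecidablePred (· ∈ X)] (hX : X.Infinite) {i m : ℕ} :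
    Nat.nth (· ∈ X) i = m ↔ m ∈ X ∧ Nat.count (· ∈ X) m = i := by
  constructor
  · rintro rfl
    exact ⟨Nat.nth_mem_of_infinite (p := (· ∈ X)) hX i,
      Nat.count_nth_of_infinite (p := (· ∈ X)) hX i⟩
  · rintro ⟨hm, rfl⟩
    exact Nat.nth_count hm

theorem measurable_nth : Measurable[ramseyAlgebra] fun (X : Set ℕ) ↦ Nat.nth (· ∈ X) := by
  classical
  let _ := ramseyAlgebra
  refine measurable_pi_lambda _ fun i ↦ measurable_to_countable' fun m ↦ ?_
  intro s A hA
  have hB : (A \ Iic m).Infinite := hA.sdiff (finite_Iic m)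
  have hagree : ∀ X ∈ ellentuck s (A \ Iic m), ∀ x ≤ m, x ∈ X ↔ x ∈ s := fun X hX x hx ↦
    ⟨fun hxX ↦ by_contra fun hxs ↦ (hX.2.2 ⟨hxX, hxs⟩).1.2 hx, fun hxs ↦ hX.2.1 hxs⟩
  have hdecide : ∀ X ∈ ellentuck s (A \ Iic m),
      Nat.nth (· ∈ X) i = m ↔ m ∈ s ∧ Nat.count (· ∈ s) m = i := fun X hX ↦ by
    have hcount : Nat.count (· ∈ X) m = Nat.count (· ∈ s) m := by
      simp only [Nat.count_eq_card_filter_range]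
      exact congrArg _ <| Finset.filter_congr fun x hx ↦
        hagree X hX x (Finset.mem_range.mp hx).le
    rw [nth_mem_eq_iff hX.1, hagree X hX m le_rfl, hcount]
  refine ⟨A \ Iic m, sdiff_subset, hB, ?_⟩
  by_cases h : m ∈ s ∧ Nat.count (· ∈ s) m = i
  · exact .inl fun X hX ↦ (hdecide X hX).mpr h
  · exact .inr fun X hX hm ↦ h ((hdecide X hX).mp hm)

theorem nth_mem_range {f : ℕ → ℕ} (hf : StrictMono f) : Nat.nth (· ∈ range f) = f := by
  have hinf : (range f).Infinite := infinite_range_of_injective hf.injective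
  exact (StrictMono.range_inj (Nat.nth_strictMono hinf) hf).mp (Nat.range_nth_of_infinite hinf)

theorem galvin_prikry {𝒳 : Set (ℕ → ℕ)} (h𝒳 : MeasurableSet 𝒳) :
    ∃ e : ℕ → ℕ, StrictMono e ∧ ((∀ d, StrictMono d → e ∘ d ∈ 𝒳) ∨
      ∀ d, StrictMono d → e ∘ d ∉ 𝒳) := by
  obtain ⟨B, -, hB, hB𝒳⟩ := measurable_nth h𝒳 ∅ univ infinite_univ
  have hmono : StrictMono (Nat.nth (· ∈ B)) := Nat.nth_strictMono hB
  have hrange (d : ℕ → ℕ) (hd : StrictMono d) :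
      range (Nat.nth (· ∈ B) ∘ d) ∈ ellentuck ∅ B := by
    refine ⟨infinite_range_of_injective (hmono.comp hd).injective, by simp, ?_⟩
    rintro _ ⟨⟨i, rfl⟩, -⟩
    exact ⟨Nat.nth_mem_of_infinite hB _, by simp⟩
  refine ⟨Nat.nth (· ∈ B), hmono, hB𝒳.imp (fun h d hd ↦ ?_) (fun h d hd ↦ ?_)⟩
  all_goals
    rw [← nth_mem_range (hmono.comp hd)]
    exact h (hrange d hd)

theorem exists_strictMono_forall_comp_eq {α : Type*} [Finite α] (c : (ℕ → ℕ) → α)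
    (hc : ∀ a, MeasurableSet (c ⁻¹' {a})) :
    ∃ e : ℕ → ℕ, StrictMono e ∧ ∃ a, ∀ d, StrictMono d → c (e ∘ d) = a := by
  classical
  have := Fintype.ofFinite α
  have key (S : Finset α) : ∃ e : ℕ → ℕ, StrictMono e ∧
      ((∃ a, ∀ d, StrictMono d → c (e ∘ d) = a) ∨ ∀ d, StrictMono d → c (e ∘ d) ∉ S) := by
    induction S using Finset.induction_on with
    | empty => exact ⟨id, strictMono_id, .inr fun _ _ ↦ Finset.notMem_empty _⟩
    | insert a S _ ih =>
      obtain ⟨e, he, heq | havoid⟩ := ih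
      · exact ⟨e, he, .inl heq⟩
      have hcomp : Measurable fun d : ℕ → ℕ ↦ e ∘ d :=
        measurable_pi_lambda _ fun i ↦ (measurable_of_countable e).comp (measurable_pi_apply i)
      obtain ⟨e', he', heq | hne⟩ := galvin_prikry (hcomp (hc a))
      · exact ⟨e ∘ e', he.comp he', .inl ⟨a, heq⟩⟩
      · refine ⟨e ∘ e', he.comp he', .inr fun d hd h ↦ ?_⟩
        exact (Finset.mem_insert.mp h).elim (hne d hd) (havoid (e' ∘ d) (he'.comp hd))
  obtain ⟨e, he, heq | havoid⟩ := key Finset.univ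
  · exact ⟨e, he, heq⟩
  · exact absurd (Finset.mem_univ _) (havoid id strictMono_id)

end GalvinPrikry

/-! ### Embeddability of well-founded trees -/

section Trees

variable {α : Type*} {β : α → Type*} {x y z : WType β}

/-- `IsChild z x` says that `z` is one of the immediate subtrees of `x`. -/
def IsChild : WType β → WType β → Prop
  | z, ⟨_, f⟩ => ∃ i, f i = z

/-- The label at the root of a tree. -/
def rootLabel : WType β → α
  | ⟨a, _⟩ => a

/-- Embeddability of trees: `x ≤ y` if `x` embeds below a child of `y`, or if the roots have the
same label and every child of `x` embeds in some child of `y`. -/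
inductive TreeLE : WType β → WType β → Prop
  | node (a : α) (f g : β a → WType β) (j : β a → β a) (h : ∀ i, TreeLE (f i) (g (j i))) :
      TreeLE ⟨a, f⟩ ⟨a, g⟩
  | child (x : WType β) (b : α) (g : β b → WType β) (j : β b) (h : TreeLE x (g j)) :
      TreeLE x ⟨b, g⟩

theorem isChild_wellFounded : WellFounded (IsChild (β := β)) := by
  refine ⟨fun x ↦ ?_⟩
  induction x with
  | mk a f ih =>
    refine ⟨_, ?_⟩
    rintro _ ⟨i, rfl⟩
    exact ih i

theorem TreeLE.of_isChild (hz : IsChild z y) (h : TreeLE x z) : TreeLE x y := by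
  obtain ⟨b, g⟩ := y
  obtain ⟨j, rfl⟩ := hz
  exact .child x b g j h

theorem TreeLE.of_rootLabel_eq (hlabel : rootLabel x = rootLabel y)
    (h : ∀ z, IsChild z x → ∃ w, IsChild w y ∧ TreeLE z w) : TreeLE x y := by
  obtain ⟨a, f⟩ := x
  obtain ⟨b, g⟩ := y
  obtain rfl : a = b := hlabel
  have hchild (i : β a) : ∃ j, TreeLE (f i) (g j) := by
    obtain ⟨_, ⟨j, rfl⟩, hle⟩ := h (f i) ⟨i, rfl⟩
    exact ⟨j, hle⟩
  choose j hj using hchild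
  exact .node a f g j hj

theorem TreeLE.refl (x : WType β) : TreeLE x x := by
  induction x with
  | mk a f ih => exact .node a f f id ih

theorem TreeLE.trans (hxy : TreeLE x y) (hyz : TreeLE y z) : TreeLE x z := by
  induction hyz generalizing x with
  | node a f g j _ ih =>
    cases hxy with
    | node _ e _ i h => exact .node a e g (j ∘ i) fun k ↦ ih _ (h k)
    | child _ _ _ i h => exact .child x a g (j i) (ih i h)
  | child y b g j _ ih => exact .child x b g j (ih hxy)

instance : IsPreorder (WType β) TreeLE where
  refl := .refl
  trans _ _ _ := .trans

open Classical in
/-- A child of `x` that embeds in no child of `y`, if there is one, and `x` itself otherwise. -/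
noncomputable def descend (x y : WType β) : WType β :=
  if h : ∃ z, IsChild z x ∧ ∀ w, IsChild w y → ¬TreeLE z w then h.choose else x

theorem descend_eq_or_isChild (x y : WType β) : descend x y = x ∨ IsChild (descend x y) x := by
  unfold descend
  split_ifs with h
  · exact .inr h.choose_spec.1
  · exact .inl rfl

theorem descend_not_treeLE (h : ∀ w, IsChild w y → ¬TreeLE x w) (w : WType β) (hw : IsChild w y) :
    ¬TreeLE (descend x y) w := by
  unfold descend
  split_ifs with hz
  · exact hz.choose_spec.2 w hw
  · exact h w hw

theorem treeLE_of_descend_eq (hlabel : rootLabel x = rootLabel y) (h : descend x y = x) :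
    TreeLE x y := by
  refine .of_rootLabel_eq hlabel fun z hz ↦ ?_
  by_contra! hzy
  have hex : ∃ z, IsChild z x ∧ ∀ w, IsChild w y → ¬TreeLE z w := ⟨z, hz, hzy⟩
  rw [descend, dif_pos hex] at h
  have hchild : IsChild hex.choose x := hex.choose_spec.1
  rw [h] at hchild
  exact isChild_wellFounded.irrefl.irrefl x hchild

end Trees

section Descent

variable {α : Type*} {β : α → Type*} (x : ℕ → WType β)

/-- Iterated descent along a sequence `x` of trees: the approximation at the index sequence `y`
starts as `x (y 0)` and repeatedly descends against the approximation at the shift of `y`. -/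
noncomputable def descent : ℕ → (ℕ → ℕ) → WType β
  | 0, y => x (y 0)
  | n + 1, y => descend (descent n y) (descent n (y ∘ Nat.succ))

theorem isLocallyConstant_descent (n : ℕ) : IsLocallyConstant (descent x n) := by
  induction n with
  | zero =>
    exact (IsLocallyConstant.of_discrete x).comp_continuous (continuous_apply 0)
  | succ n ih =>
    have hshift : Continuous fun y : ℕ → ℕ ↦ y ∘ Nat.succ :=
      continuous_pi fun i ↦ continuous_apply (i + 1)
    exact (ih.prodMk (ih.comp_continuous hshift)).comp fun p ↦ descend p.1 p.2

theorem exists_descent_eventually_eq (y : ℕ → ℕ) : ∃ N, ∀ n ≥ N, descent x n y = descent x N y := by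
  obtain ⟨_, ⟨N, rfl⟩, hmin⟩ :=
    isChild_wellFounded.has_min (range fun n ↦ descent x n y) (range_nonempty _)
  have hnot (n : ℕ) : ¬IsChild (descent x n y) (descent x N y) := hmin _ ⟨n, rfl⟩
  refine ⟨N, fun n hn ↦ ?_⟩
  induction n, hn using Nat.le_induction with
  | base => rfl
  | succ n _ ih =>
    rw [← ih]
    refine (descend_eq_or_isChild _ _).resolve_right fun h ↦ hnot (n + 1) ?_
    rw [← ih]
    exact h

/-- The first stage from which the descent at `y` is constant. -/
noncomputable def settlingTime (y : ℕ → ℕ) : ℕ :=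
  sInf {N | ∀ n ≥ N, descent x n y = descent x N y}

/-- The eventual value of the descent at `y`. -/
noncomputable def descentLimit (y : ℕ → ℕ) : WType β := descent x (settlingTime x y) y

theorem descent_eq_descentLimit {y : ℕ → ℕ} {n : ℕ} (hn : settlingTime x y ≤ n) :
    descent x n y = descentLimit x y :=
  Nat.sInf_mem (exists_descent_eventually_eq x y) n hn

theorem isChild_descent_of_settlingTime_eq {y : ℕ → ℕ} {n : ℕ} (hn : settlingTime x y = n + 1) :
    IsChild (descent x (n + 1) y) (descent x n y) := by
  refine (descend_eq_or_isChild _ _).resolve_left fun heq ↦ ?_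
  have hle : settlingTime x y ≤ n := Nat.sInf_le fun m hm ↦ by
    obtain rfl | hlt := eq_or_lt_of_le hm
    · rfl
    · rw [descent_eq_descentLimit x (hn.trans_le hlt), ← descent_eq_descentLimit x hn.le]
      exact heq
  lia

theorem measurableSet_rootLabel_descentLimit (a : α) :
    MeasurableSet ((fun y ↦ rootLabel (descentLimit x y)) ⁻¹' {a}) := by
  have heq : (fun y ↦ rootLabel (descentLimit x y)) ⁻¹' {a} =
      ⋃ N, ⋂ n ≥ N, {y | rootLabel (descent x n y) = a} := by
    ext y
    simp only [mem_preimage, mem_singleton_iff, mem_iUnion, mem_iInter, mem_ofPred_eq]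
    constructor
    · rintro rfl
      exact ⟨settlingTime x y, fun n hn ↦ by rw [descent_eq_descentLimit x hn]⟩
    · rintro ⟨N, hN⟩
      rw [← hN _ (le_max_left N (settlingTime x y)),
        descent_eq_descentLimit x (le_max_right N (settlingTime x y))]
  rw [heq]
  exact .iUnion fun N ↦ .iInter fun n ↦ .iInter fun _ ↦
    ((isLocallyConstant_descent x n).comp rootLabel).isOpen_fiber a |>.measurableSet

variable {x}

theorem descent_not_treeLE_isChild (hx : ∀ i j, i < j → ¬TreeLE (x i) (x j)) (n : ℕ) :
    ∀ y : ℕ → ℕ, StrictMono y → ∀ w, IsChild w (descent x n (y ∘ Nat.succ)) →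
      ¬TreeLE (descent x n y) w := by
  induction n with
  | zero => exact fun y hy w hw h ↦ hx _ _ (hy Nat.zero_lt_one) (h.of_isChild hw)
  | succ n ih =>
    intro y hy
    have hstep := descend_not_treeLE (ih y hy)
    obtain heq | hchild := descend_eq_or_isChild (descent x n (y ∘ Nat.succ))
      (descent x n ((y ∘ Nat.succ) ∘ Nat.succ))
    · intro w hw
      exact hstep w (heq ▸ hw)
    · exact fun w hw h ↦ hstep _ hchild (h.of_isChild hw)

/- If the shift of `y` moved at a stage `n + 1 ≥ settlingTime x y`, it moved to a child of its
previous value, and the already settled descent at `y` embeds in no such child. -/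
theorem settlingTime_shift_lt (hx : ∀ i j, i < j → ¬TreeLE (x i) (x j)) {y : ℕ → ℕ}
    (hy : StrictMono y)
    (hlabel : rootLabel (descentLimit x y) = rootLabel (descentLimit x (y ∘ Nat.succ))) :
    settlingTime x (y ∘ Nat.succ) < settlingTime x y := by
  set y' := y ∘ Nat.succ
  have hle : TreeLE (descentLimit x y) (descentLimit x y') := by
    refine treeLE_of_descend_eq hlabel ?_
    let n := max (settlingTime x y) (settlingTime x y')
    have hn : descent x (n + 1) y = descend (descent x n y) (descent x n y') := rfl
    rwa [descent_eq_descentLimit x ((le_max_left _ _).trans n.le_succ),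
      descent_eq_descentLimit x (le_max_left _ _),
      descent_eq_descentLimit x (le_max_right _ _), eq_comm] at hn
  by_contra! hge
  cases hn : settlingTime x y' with
  | zero =>
    rw [descentLimit, descentLimit, hn, Nat.le_zero.mp (hge.trans_eq hn)] at hle
    exact hx _ _ (hy Nat.zero_lt_one) hle
  | succ n =>
    have hchild := isChild_descent_of_settlingTime_eq x hn
    refine descend_not_treeLE (descent_not_treeLE_isChild hx n y hy) _ hchild ?_
    rw [← descent_eq_descentLimit x hge, ← descent_eq_descentLimit x le_rfl, hn] at hle
    exact hle

theorem wellQuasiOrdered_treeLE [Finite α] : WellQuasiOrdered (TreeLE (β := β)) := by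
  intro x
  by_contra! hx
  obtain ⟨e, he, a, ha⟩ := exists_strictMono_forall_comp_eq
    (fun y ↦ rootLabel (descentLimit x y)) (measurableSet_rootLabel_descentLimit x)
  let shift (n : ℕ) : ℕ → ℕ := fun i ↦ i + n
  have shift_mono (n : ℕ) : StrictMono (shift n) := strictMono_id.add_const n
  have hdecr : StrictAnti fun n ↦ settlingTime x (e ∘ shift n) :=
    strictAnti_nat_of_succ_lt fun n ↦ by
      have hshift : e ∘ shift (n + 1) = (e ∘ shift n) ∘ Nat.succ := by
        ext i
        simp only [shift, Function.comp_apply, Nat.succ_add_eq_add_succ]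
      rw [hshift]
      refine settlingTime_shift_lt hx (he.comp (shift_mono n)) ?_
      rw [← hshift, ha _ (shift_mono n), ha _ (shift_mono (n + 1))]
  exact not_strictAnti_of_wellFoundedLT _ hdecr

end Descent

/-! ### Ordered sums -/

section Embeds

theorem biUnion_list_cons {α : Type*} (s : Set α) (P : List (Set α)) :
    ⋃ u ∈ s :: P, u = s ∪ ⋃ u ∈ P, u := by
  simp only [List.mem_cons, iUnion_iUnion_eq_or_left]

variable {L M N : Type*} [LinearOrder L] [LinearOrder M] [LinearOrder N]

/-- Order embeddability between sets of possibly different linear orders. -/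
def Embeds (s : Set L) (t : Set M) : Prop := Nonempty (s ↪o t)

/-- The strict order read in one of two directions: `x < y` if `b = true` and `y < x` if
`b = false`. It lets `ω`-sums and `ω*`-sums be treated together. -/
def Before (b : Bool) (x y : L) : Prop := cond b (x < y) (y < x)

/-- Every element of `s` comes before every element of `t` in direction `b`. -/
def Precedes (b : Bool) (s t : Set L) : Prop := ∀ x ∈ s, ∀ y ∈ t, Before b x y

theorem before_of_not_before_of_before {b : Bool} {x y z : L} (hyx : ¬Before b y x)
    (hyz : Before b y z) : Before b x z := by
  cases b
  · exact lt_of_lt_of_le hyz (not_lt.mp hyx)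
  · exact lt_of_le_of_lt (not_lt.mp hyx) hyz

theorem Before.asymm {b : Bool} {x y : L} (h : Before b x y) : ¬Before b y x := by
  cases b <;> exact lt_asymm h

theorem Embeds.trans {s : Set L} {t : Set M} {u : Set N} : Embeds s t → Embeds t u → Embeds s u
  | ⟨f⟩, ⟨g⟩ => ⟨f.trans g⟩

theorem Embeds.of_subset {s t : Set L} (h : s ⊆ t) : Embeds s t :=
  ⟨Set.embeddingOfSubset s t h, .rfl⟩

theorem embeds_empty (t : Set M) : Embeds (∅ : Set L) t := ⟨.ofIsEmpty⟩

theorem Precedes.mono {b : Bool} {s s' t t' : Set L} (h : Precedes b s t) (hs : s' ⊆ s)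
    (ht : t' ⊆ t) : Precedes b s' t' :=
  fun x hx y hy ↦ h x (hs hx) y (ht hy)

theorem Embeds.iUnion {ι κ : Type*} [LinearOrder ι] [Preorder κ] {b : Bool} {u : ι → Set L}
    {v : κ → Set M} (hu : ∀ i j, i < j → Precedes b (u i) (u j))
    (hv : ∀ i j, i < j → Precedes b (v i) (v j)) {φ : ι → κ} (hφ : StrictMono φ)
    (h : ∀ i, Embeds (u i) (v (φ i))) : Embeds (⋃ i, u i) (⋃ i, v i) := by
  let f (i : ι) : u i ↪o v (φ i) := (h i).some
  choose idx hidx using fun x : ⋃ i, u i ↦ mem_iUnion.mp x.2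
  let F (x : ⋃ i, u i) : ⋃ i, v i :=
    ⟨f (idx x) ⟨x, hidx x⟩, mem_iUnion_of_mem _ (f (idx x) ⟨x, hidx x⟩).2⟩
  have hf (i j : ι) (hij : i = j) (x : u i) (y : u j) (hxy : Before b x.1 y.1) :
      Before b (f i x).1 (f j y).1 := by
    subst hij
    cases b <;> exact (f i).lt_iff_lt.mpr hxy
  have hF (x y : ⋃ i, u i) (hxy : Before b x.1 y.1) : Before b (F x).1 (F y).1 := by
    obtain hlt | heq | hgt := lt_trichotomy (idx x) (idx y)
    · exact hv _ _ (hφ hlt) _ (f _ _).2 _ (f _ _).2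
    · exact hf _ _ heq _ _ hxy
    · exact absurd (hu _ _ hgt _ (hidx y) _ (hidx x)) hxy.asymm
  refine ⟨OrderEmbedding.ofStrictMono F fun x y hxy ↦ ?_⟩
  cases b
  · exact hF y x hxy
  · exact hF x y hxy

theorem Precedes.cond {b : Bool} {s t : Set L} (h : Precedes b s t) :
    ∀ i j : Bool, i < j → Precedes b (cond i t s) (cond j t s)
  | false, true, _ => h

theorem Embeds.union {b : Bool} {s t : Set L} {s' t' : Set M} (hst : Precedes b s t)
    (hst' : Precedes b s' t') (hs : Embeds s s') (ht : Embeds t t') :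
    Embeds (s ∪ t) (s' ∪ t') := by
  rw [union_comm s, union_comm s', union_eq_iUnion, union_eq_iUnion]
  exact .iUnion hst.cond hst'.cond strictMono_id (Bool.forall_bool.mpr ⟨hs, ht⟩)

theorem precedes_biUnion_list {b : Bool} {s : Set L} {P : List (Set L)}
    (h : ∀ u ∈ P, Precedes b s u) : Precedes b s (⋃ u ∈ P, u) := fun x hx y hy ↦ by
  obtain ⟨u, hu, hyu⟩ := mem_iUnion₂.mp hy
  exact h u hu x hx y hyu

theorem embeds_biUnion_of_sublistForall₂ {b : Bool} {P : List (Set L)} {Q : List (Set M)}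
    (h : List.SublistForall₂ Embeds P Q) (hP : P.Pairwise (Precedes b))
    (hQ : Q.Pairwise (Precedes b)) : Embeds (⋃ u ∈ P, u) (⋃ u ∈ Q, u) := by
  induction h with
  | nil => simpa using embeds_empty _
  | cons huv _ ih =>
    rw [List.pairwise_cons] at hP hQ
    rw [biUnion_list_cons, biUnion_list_cons]
    exact .union (precedes_biUnion_list hP.1) (precedes_biUnion_list hQ.1) huv (ih hP.2 hQ.2)
  | cons_right _ ih =>
    rw [biUnion_list_cons]
    exact (ih hP (List.pairwise_cons.mp hQ).2).trans (.of_subset subset_union_right)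

end Embeds

section Represents

/-- The labels of the trees coding sets: the empty set, a singleton, or an infinite sum in
direction `b`. -/
inductive Kind
  | empty
  | point
  | sum (b : Bool)

instance : Finite Kind := by
  refine Finite.of_surjective (fun o : Option (Option Bool) ↦
    o.elim Kind.empty fun o ↦ o.elim Kind.point Kind.sum) ?_
  rintro (_ | _ | b)
  · exact ⟨none, rfl⟩
  · exact ⟨some none, rfl⟩
  · exact ⟨some (some b), rfl⟩

/-- The index type of the children of a node of the given kind. -/
def Kind.Arity : Kind → Type
  | .empty | .point => Empty
  | .sum _ => ℕ

variable {L M : Type*} [LinearOrder L] [LinearOrder M]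

/-- The tree `x` codes the set `s`. A sum node stands for an ordered union of coded sets each of
which embeds in infinitely many others; this makes the union additively indecomposable. -/
inductive Represents : WType Kind.Arity → Set L → Prop
  | empty (f : Kind.empty.Arity → WType Kind.Arity) : Represents ⟨.empty, f⟩ ∅
  | point (f : Kind.point.Arity → WType Kind.Arity) (a : L) : Represents ⟨.point, f⟩ {a}
  | sum (b : Bool) (f : ℕ → WType Kind.Arity) (u : ℕ → Set L)
      (hu : ∀ i j, i < j → Precedes b (u i) (u j))
      (hrec : ∀ i, ∃ᶠ j in atTop, Embeds (u i) (u j))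
      (h : ∀ i, Represents (f i) (u i)) : Represents ⟨.sum b, f⟩ (⋃ i, u i)

theorem Represents.embeds {x y : WType Kind.Arity} (hxy : TreeLE x y) :
    ∀ {s : Set L} {t : Set M}, Represents x s → Represents y t → Embeds s t := by
  induction hxy with
  | node a f g j _ ih =>
    intro s t hs ht
    cases hs with
    | empty => exact embeds_empty t
    | point _ a =>
      cases ht with
      | point _ b =>
        exact ⟨OrderEmbedding.ofStrictMono (fun _ ↦ ⟨b, rfl⟩) (Subsingleton.strictMono _)⟩
    | sum b _ u hu _ hf =>
      cases ht with
      | sum _ _ v hv hrec hg =>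
        have hfreq (i : ℕ) : ∃ᶠ k in atTop, Embeds (u i) (v k) :=
          (hrec (j i)).mono fun k hk ↦ (ih i (hf i) (hg (j i))).trans hk
        obtain ⟨φ, hφ, hembeds⟩ := extraction_forall_of_frequently hfreq
        exact .iUnion hu hv hφ hembeds
  | child x a g j _ ih =>
    intro s t hs ht
    cases ht with
    | empty => exact j.elim
    | point => exact j.elim
    | sum _ _ v _ _ hg => exact (ih hs (hg j)).trans (.of_subset (subset_iUnion v j))

/-- The set `s` is coded by some tree. -/
def Representable (s : Set L) : Prop := ∃ x, Represents x s

/-- The set `s` is a sum, in direction `b`, of finitely many representable sets. -/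
def IsFiniteSum (b : Bool) (s : Set L) : Prop :=
  ∃ P : List (Set L), P.Pairwise (Precedes b) ∧ (∀ u ∈ P, Representable u) ∧ s = ⋃ u ∈ P, u

theorem eventually_frequently_of_wellQuasiOrdered {α : Type*} {r : α → α → Prop} [IsPreorder α r]
    (hr : WellQuasiOrdered r) (f : ℕ → α) :
    ∀ᶠ n in atTop, ∃ᶠ m in atTop, r (f n) (f m) := by
  by_contra h
  obtain ⟨φ, hφ, hrare⟩ := extraction_of_frequently_atTop (not_eventually.mp h)
  obtain ⟨g, hg⟩ := hr.exists_monotone_subseq (f ∘ φ)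
  refine hrare (g 0) (frequently_atTop.mpr fun N ↦ ?_)
  exact ⟨φ (g N), (g.strictMono.id_le N).trans (hφ.id_le _), hg 0 N (Nat.zero_le N)⟩

theorem representable_empty : Representable (∅ : Set L) :=
  ⟨⟨.empty, Empty.elim⟩, .empty _⟩

theorem representable_singleton (a : L) : Representable {a} :=
  ⟨⟨.point, Empty.elim⟩, .point _ a⟩

theorem IsFiniteSum.reverse {b : Bool} {s : Set L} (h : IsFiniteSum b s) : IsFiniteSum (!b) s := by
  obtain ⟨P, hP, hrep, rfl⟩ := h
  refine ⟨P.reverse, List.pairwise_reverse.mpr (hP.imp ?_), by simpa using hrep, by simp⟩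
  intro u v huv x hx y hy
  cases b <;> exact huv y hy x hx

theorem Representable.isFiniteSum {s : Set L} (h : Representable s) (b : Bool) :
    IsFiniteSum b s :=
  ⟨[s], List.pairwise_singleton _ _, by simpa using h, by simp⟩

theorem isFiniteSum_iUnion_of_representable {b : Bool} {u : ℕ → Set L}
    (hu : ∀ i j, i < j → Precedes b (u i) (u j)) (h : ∀ i, Representable (u i)) :
    IsFiniteSum b (⋃ i, u i) := by
  choose x hx using h
  obtain ⟨N, hN⟩ :=
    eventually_atTop.mp (eventually_frequently_of_wellQuasiOrdered wellQuasiOrdered_treeLE x)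
  have hrec (i : ℕ) : ∃ᶠ j in atTop, Embeds (u (i + N)) (u (j + N)) := by
    refine frequently_atTop.mpr fun k ↦ ?_
    obtain ⟨j, hj, hle⟩ := frequently_atTop.mp (hN (i + N) (Nat.le_add_left N i)) (k + N)
    exact ⟨j - N, by lia, by
      rw [Nat.sub_add_cancel (by lia)]
      exact Represents.embeds hle (hx _) (hx _)⟩
  have htail : Representable (⋃ i, u (i + N)) :=
    ⟨_, .sum b _ _ (fun i j hij ↦ hu _ _ (Nat.add_lt_add_right hij N)) hrec fun i ↦ hx (i + N)⟩
  refine ⟨(List.range N).map u ++ [⋃ i, u (i + N)], ?_, ?_, ?_⟩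
  · simp only [List.pairwise_append, List.pairwise_map, List.pairwise_singleton, List.mem_map,
      List.mem_range, List.mem_singleton, true_and]
    refine ⟨List.pairwise_lt_range.imp fun hij ↦ hu _ _ hij, ?_⟩
    rintro _ ⟨i, hi, rfl⟩ _ rfl y hy z hz
    obtain ⟨j, hj⟩ := mem_iUnion.mp hz
    exact hu i (j + N) (by lia) y hy z hj
  · simp only [List.mem_append, List.mem_map, List.mem_singleton]
    rintro _ (⟨i, -, rfl⟩ | rfl)
    exacts [⟨x i, hx i⟩, htail]
  · ext y
    simp only [mem_iUnion, List.mem_append, List.mem_map, List.mem_range, List.mem_singleton,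
      exists_prop]
    constructor
    · rintro ⟨i, hi⟩
      obtain hlt | hge := lt_or_ge i N
      · exact ⟨u i, .inl ⟨i, hlt, rfl⟩, hi⟩
      · exact ⟨_, .inr rfl, mem_iUnion_of_mem (i - N) (by rwa [Nat.sub_add_cancel hge])⟩
    · rintro ⟨_, ⟨i, -, rfl⟩ | rfl, hy⟩
      exacts [⟨i, hy⟩, (mem_iUnion.mp hy).imp' (· + N) fun _ h ↦ h]

end Represents

theorem exists_seq_enumerating_lists {α : Type*} {r : α → α → Prop} {R : ℕ → List α}
    (hne : ∀ n, R n ≠ []) (hR : ∀ n, (R n).Pairwise r)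
    (hlt : ∀ m n, m < n → ∀ a ∈ R m, ∀ b ∈ R n, r a b) :
    ∃ u : ℕ → α, (∀ i j, i < j → r (u i) (u j)) ∧ range u = {a | ∃ n, a ∈ R n} := by
  let Q (n : ℕ) : List α := (List.range n).flatMap R
  have Q_succ (n : ℕ) : Q (n + 1) = Q n ++ R n := by
    simp only [Q, List.range_succ, List.flatMap_append, List.flatMap_singleton]
  have Q_prefix {m n : ℕ} (hmn : m ≤ n) : Q m <+: Q n := by
    induction n, hmn using Nat.le_induction with
    | base => exact List.prefix_rfl
    | succ n _ ih => exact ih.trans (Q_succ n ▸ List.prefix_append _ _)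
  have Q_length (n : ℕ) : n ≤ (Q n).length := by
    induction n with
    | zero => exact Nat.zero_le _
    | succ n ih =>
      rw [Q_succ, List.length_append]
      exact Nat.add_le_add ih (List.length_pos_iff.mpr (hne n))
  have Q_pairwise (n : ℕ) : (Q n).Pairwise r :=
    List.pairwise_flatMap.mpr ⟨fun i _ ↦ hR i, List.pairwise_lt_range.imp fun hij ↦ hlt _ _ hij⟩
  let u (k : ℕ) : α := (Q (k + 1))[k]'(Q_length (k + 1))
  have u_eq {n k : ℕ} (hk : k < (Q n).length) : u k = (Q n)[k] := by
    obtain h | h := le_total (k + 1) n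
    · exact (Q_prefix h).getElem _
    · exact ((Q_prefix h).getElem hk).symm
  refine ⟨u, fun i j hij ↦ ?_, Subset.antisymm ?_ ?_⟩
  · have hi : i < (Q (j + 1)).length := (hij.trans j.lt_succ_self).trans_le (Q_length _)
    rw [u_eq hi]
    exact List.pairwise_iff_getElem.mp (Q_pairwise (j + 1)) i j hi _ hij
  · rintro _ ⟨k, rfl⟩
    obtain ⟨n, -, hn⟩ := List.mem_flatMap.mp (List.getElem_mem (Q_length (k + 1)))
    exact ⟨n, hn⟩
  · rintro a ⟨n, hn⟩
    have ha : a ∈ Q (n + 1) := Q_succ n ▸ List.mem_append_right _ hn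
    obtain ⟨k, hk, rfl⟩ := List.mem_iff_getElem.mp ha
    exact ⟨k, u_eq hk⟩

section HausdorffClass

variable {L : Type*} [LinearOrder L]

theorem IsFiniteSum.iUnion {b : Bool} {s : ℕ → Set L}
    (hs : ∀ i j, i < j → Precedes b (s i) (s j)) (h : ∀ i, IsFiniteSum b (s i)) :
    IsFiniteSum b (⋃ i, s i) := by
  choose P hP hrep hsP using h
  have hmem_P {n : ℕ} {v : Set L} (hv : v ∈ P n) : v ⊆ s n := by
    rw [hsP n]
    exact subset_biUnion_of_mem (u := fun v : Set L ↦ v) (s := {v | v ∈ P n}) hv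
  -- padding by `∅` makes every list nonempty
  have hmem {n : ℕ} {v : Set L} (hv : v ∈ P n ++ [∅]) : v ∈ P n ∨ v = ∅ := by simpa using hv
  have hsub {n : ℕ} {v : Set L} (hv : v ∈ P n ++ [∅]) : v ⊆ s n := by
    obtain hv | rfl := hmem hv
    exacts [hmem_P hv, empty_subset _]
  obtain ⟨u, hu, hrange⟩ := exists_seq_enumerating_lists
    (r := Precedes b) (R := fun n ↦ P n ++ [∅])
    (fun n ↦ List.append_ne_nil_of_right_ne_nil _ (List.cons_ne_nil _ _))
    (fun n ↦ List.pairwise_append.mpr ⟨hP n, List.pairwise_singleton _ _, fun v _ w hw x _ y hy ↦ by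
      rw [List.mem_singleton.mp hw] at hy
      exact hy.elim⟩)
    fun m n hmn v hv w hw ↦ (hs m n hmn).mono (hsub hv) (hsub hw)
  have hu_rep (k : ℕ) : Representable (u k) := by
    obtain ⟨n, hn⟩ : u k ∈ {v | ∃ n, v ∈ P n ++ [∅]} := hrange ▸ mem_range_self k
    obtain hn | hn := hmem hn
    exacts [hrep n _ hn, hn ▸ representable_empty]
  have hunion : ⋃ i, s i = ⋃ k, u k := by
    rw [← sUnion_range u, hrange]
    refine Subset.antisymm (iUnion_subset fun n ↦ ?_) (sUnion_subset ?_)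
    · rw [hsP n]
      exact iUnion₂_subset fun v hv ↦ subset_sUnion_of_mem ⟨n, List.mem_append_left _ hv⟩
    · rintro v ⟨n, hn⟩
      exact (hsub hn).trans (subset_iUnion s n)
  rw [hunion]
  exact isFiniteSum_iUnion_of_representable hu hu_rep

theorem IsFiniteSum.change_direction {b : Bool} {s : Set L} (h : IsFiniteSum b s) (b' : Bool) :
    IsFiniteSum b' s := by
  obtain rfl | rfl := Bool.eq_or_eq_not b' b
  exacts [h, h.reverse]

/-- The smallest class of subsets of `L` that contains the subsingletons and is closed under sums
of type `ω` (`b = true`) and `ω*` (`b = false`). By a theorem of Hausdorff its members are the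
countable scattered subsets. -/
inductive HausdorffClass : Set L → Prop
  | subsingleton (s : Set L) (hs : s.Subsingleton) : HausdorffClass s
  | sum (b : Bool) (u : ℕ → Set L) (hu : ∀ i j, i < j → Precedes b (u i) (u j))
      (h : ∀ i, HausdorffClass (u i)) : HausdorffClass (⋃ i, u i)

theorem HausdorffClass.isFiniteSum {s : Set L} (h : HausdorffClass s) : IsFiniteSum true s := by
  induction h with
  | subsingleton s hs =>
    obtain rfl | ⟨a, rfl⟩ := hs.eq_empty_or_singleton
    exacts [representable_empty.isFiniteSum true, (representable_singleton a).isFiniteSum true]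
  | sum b u hu _ ih =>
    exact (IsFiniteSum.iUnion hu fun i ↦ (ih i).change_direction b).change_direction true

theorem HausdorffClass.mono {s t : Set L} (ht : HausdorffClass t) (hst : s ⊆ t) :
    HausdorffClass s := by
  induction ht generalizing s with
  | subsingleton t ht => exact .subsingleton s (ht.anti hst)
  | sum b u hu _ ih =>
    rw [← inter_eq_left.mpr hst, inter_iUnion]
    exact .sum b _ (fun i j hij ↦ (hu i j hij).mono inter_subset_right inter_subset_right)
      fun i ↦ ih i inter_subset_right

theorem HausdorffClass.union {s t : Set L} (hst : Precedes true s t) (hs : HausdorffClass s)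
    (ht : HausdorffClass t) : HausdorffClass (s ∪ t) := by
  let u : ℕ → Set L
    | 0 => s
    | 1 => t
    | _ + 2 => ∅
  have hu : ∀ i j, i < j → Precedes true (u i) (u j)
    | 0, 1, _ => hst
    | 0, _ + 2, _ | 1, _ + 2, _ | _ + 2, _ + 2, _ => fun _ _ _ hy ↦ hy.elim
  have hunion : s ∪ t = ⋃ n, u n := Subset.antisymm
    (union_subset (subset_iUnion u 0) (subset_iUnion u 1)) <| iUnion_subset fun
      | 0 => subset_union_left
      | 1 => subset_union_right
      | _ + 2 => empty_subset _
  rw [hunion]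
  exact .sum true u hu fun
    | 0 => hs
    | 1 => ht
    | _ + 2 => .subsingleton ∅ subsingleton_empty

theorem exists_embeds_of_forall_isFiniteSum {L : ℕ → Type*} [∀ i, LinearOrder (L i)]
    (s : ∀ i, Set (L i)) (h : ∀ i, IsFiniteSum true (s i)) :
    ∃ i j, i < j ∧ Embeds (s i) (s j) := by
  choose P hP hrep hsP using h
  have : Nonempty (WType Kind.Arity) := ⟨⟨.empty, Empty.elim⟩⟩
  choose! code hcode using fun i (u : Set (L i)) (hu : u ∈ P i) ↦ hrep i u hu
  have higman : WellQuasiOrdered (List.SublistForall₂ (TreeLE (β := Kind.Arity))) := by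
    have := Set.PartiallyWellOrderedOn.partiallyWellOrderedOn_sublistForall₂ _
      (partiallyWellOrderedOn_univ_iff.mpr (wellQuasiOrdered_treeLE (β := Kind.Arity)))
    simpa [partiallyWellOrderedOn_univ_iff] using this
  obtain ⟨i, j, hij, hle⟩ := higman fun i ↦ (P i).map (code i)
  refine ⟨i, j, hij, ?_⟩
  rw [hsP i, hsP j]
  refine embeds_biUnion_of_sublistForall₂ ?_ (hP i) (hP j)
  rw [List.sublistForall₂_map_left_iff, List.sublistForall₂_map_right_iff,
    List.sublistForall₂_iff] at hle
  rw [List.sublistForall₂_iff]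
  obtain ⟨Q, hQ, hsub⟩ := hle
  exact ⟨Q, List.forall₂_iff_get.mpr ⟨hQ.length_eq, fun k hk hk' ↦ Represents.embeds (hQ.get hk hk')
    (hcode i _ (List.get_mem _ _)) (hcode j _ (hsub.subset (List.get_mem _ _)))⟩, hsub⟩

end HausdorffClass

/-! ### Hausdorff's condensation -/

section Dichotomy

variable {L : Type*} [LinearOrder L]

theorem HausdorffClass.of_forall_sep_not_before {U : Set L} (hU : U.Countable) (b : Bool)
    (h : ∀ x ∈ U, HausdorffClass {y ∈ U | ¬Before b x y}) : HausdorffClass U := by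
  classical
  obtain rfl | hne := U.eq_empty_or_nonempty
  · exact .subsingleton ∅ subsingleton_empty
  obtain ⟨e, rfl⟩ := hU.exists_eq_range hne
  let piece (n : ℕ) : Set L :=
    {y ∈ range e | ¬Before b (e n) y ∧ ∀ m < n, Before b (e m) y}
  have hpiece : range e = ⋃ n, piece n := by
    refine Subset.antisymm (fun y hy ↦ ?_) (iUnion_subset fun n ↦ sep_subset _ _)
    have hex : ∃ n, ¬Before b (e n) y := by
      obtain ⟨n, rfl⟩ := hy
      exact ⟨n, fun h ↦ h.asymm h⟩
    exact mem_iUnion_of_mem (Nat.find hex)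
      ⟨hy, Nat.find_spec hex, fun m hm ↦ not_not.mp (Nat.find_min hex hm)⟩
  rw [hpiece]
  refine .sum b piece (fun i j hij x hx y hy ↦ ?_) fun n ↦ (h (e n) ⟨n, rfl⟩).mono
    fun y hy ↦ ⟨hy.1, hy.2.1⟩
  exact before_of_not_before_of_before hx.2.1 (hy.2.2 i hij)

/-- Hausdorff's condensation: two points are equivalent if the interval between them belongs to
the Hausdorff class. -/
def condensation (L : Type*) [LinearOrder L] : Setoid L where
  r x y := HausdorffClass (uIcc x y)
  iseqv := by
    refine ⟨fun x ↦ .subsingleton _ (by simp), fun h ↦ by rwa [uIcc_comm], ?_⟩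
    intro x y z hxy hyz
    wlog hxz : x ≤ z generalizing x z
    · rw [uIcc_comm] at hxy hyz ⊢
      exact this hyz hxy (le_of_not_ge hxz)
    obtain hyx | hxy' := le_total y x
    · exact hyz.mono (uIcc_subset_uIcc_right (mem_uIcc_of_le hyx hxz))
    obtain hzy | hyz' := le_total z y
    · exact hxy.mono (uIcc_subset_uIcc_left (mem_uIcc_of_le hxz hzy))
    rw [uIcc_of_le hxz, ← Icc_union_Ioc_eq_Icc hxy' hyz']
    rw [uIcc_of_le hxy'] at hxy
    rw [uIcc_of_le hyz'] at hyz
    exact hxy.union (fun u hu v hv ↦ hu.2.trans_lt hv.1) (hyz.mono Ioc_subset_Icc_self)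

theorem condensation_of_mem_uIcc {x y z : L} (h : condensation L x z) (hy : y ∈ uIcc x z) :
    condensation L x y := HausdorffClass.mono h (uIcc_subset_uIcc_left hy)

theorem HausdorffClass.condensation_class [Countable L] (x : L) :
    HausdorffClass {y | condensation L x y} := by
  have hside (b : Bool) : HausdorffClass {y | condensation L x y ∧ ¬Before b y x} := by
    refine .of_forall_sep_not_before (to_countable _) b fun z hz ↦
      HausdorffClass.mono hz.1 fun y hy ↦ ?_
    cases b
    · exact mem_uIcc_of_ge (not_lt.mp hy.2) (not_lt.mp hy.1.2)
    · exact mem_uIcc_of_le (not_lt.mp hy.1.2) (not_lt.mp hy.2)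
  have hsplit : {y | condensation L x y} ⊆
      {y | condensation L x y ∧ y ≤ x} ∪ {y | condensation L x y ∧ x < y} :=
    fun y hy ↦ (le_or_gt y x).imp (⟨hy, ·⟩) (⟨hy, ·⟩)
  refine .mono (.union (fun y hy z hz ↦ hy.2.trans_lt hz.2) ((hside false).mono ?_)
    ((hside true).mono ?_)) hsplit
  · exact fun y hy ↦ ⟨hy.1, hy.2.not_gt⟩
  · exact fun y hy ↦ ⟨hy.1, hy.2.not_gt⟩

theorem exists_between_not_condensation [Countable L] {a b : L} (hab : a < b)
    (h : ¬condensation L a b) :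
    ∃ c, a < c ∧ c < b ∧ ¬condensation L a c ∧ ¬condensation L c b := by
  by_contra! hcover
  have hsplit : uIcc a b ⊆ {y ∈ uIcc a b | condensation L a y} ∪
      {y ∈ uIcc a b | ¬condensation L a y} :=
    fun y hy ↦ (em (condensation L a y)).imp (⟨hy, ·⟩) (⟨hy, ·⟩)
  refine h (.mono (.union ?_ ?_ ?_) hsplit)
  · rintro y ⟨-, hay⟩ z ⟨hz, haz⟩
    rw [uIcc_of_le hab.le] at hz
    exact not_le.mp fun hzy ↦ haz (condensation_of_mem_uIcc hay (mem_uIcc_of_le hz.1 hzy))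
  · exact (HausdorffClass.condensation_class a).mono fun y hy ↦ hy.2
  · refine (HausdorffClass.condensation_class b).mono fun y ⟨hy, hay⟩ ↦ ?_
    rw [uIcc_of_le hab.le] at hy
    obtain rfl | hay_lt := hy.1.eq_or_lt
    · exact absurd ((condensation L).refl a) hay
    obtain rfl | hyb_lt := hy.2.eq_or_lt
    · exact (condensation L).refl y
    · exact (condensation L).symm (hcover y hay_lt hyb_lt hay)

theorem denselyOrdered_range_out_condensation [Countable L] :
    DenselyOrdered (range (Quotient.out : Quotient (condensation L) → L)) where
  dense := by
    rintro ⟨_, p, rfl⟩ ⟨_, q, rfl⟩ hpq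
    have hpq_lt : p.out < q.out := hpq
    have hpq_ne : ¬condensation L p.out q.out := fun h ↦
      hpq_lt.ne (congrArg Quotient.out (Quotient.out_equiv_out.mp h))
    obtain ⟨c, hpc, hcq, hpc_ne, hcq_ne⟩ := exists_between_not_condensation hpq_lt hpq_ne
    have hc : condensation L c (Quotient.mk (condensation L) c).out :=
      (condensation L).symm (Quotient.mk_out c)
    refine ⟨⟨_, Quotient.mk _ c, rfl⟩, not_le.mp fun hle ↦ hpc_ne ?_,
      not_le.mp fun hle ↦ hcq_ne ?_⟩
    · exact (condensation L).symm (condensation_of_mem_uIcc hc (mem_uIcc_of_ge hle hpc.le))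
    · exact condensation_of_mem_uIcc hc (mem_uIcc_of_le hcq.le hle)

theorem exists_not_condensation [Countable L] (h : ¬HausdorffClass (univ : Set L)) :
    ∃ x y : L, ¬condensation L x y := by
  by_contra! hall
  obtain hL | ⟨⟨x⟩⟩ := isEmpty_or_nonempty L
  · exact h (.subsingleton univ subsingleton_of_subsingleton)
  · exact h ((HausdorffClass.condensation_class x).mono fun y _ ↦ hall x y)

theorem nonempty_orderEmbedding_of_not_hausdorffClass [Countable L]
    (h : ¬HausdorffClass (univ : Set L)) (M : Type*) [LinearOrder M] [Countable M] :
    Nonempty (M ↪o L) := by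
  let D := range (Quotient.out : Quotient (condensation L) → L)
  have : DenselyOrdered D := denselyOrdered_range_out_condensation
  obtain ⟨x, y, hxy⟩ := exists_not_condensation h
  have : Nontrivial D := ⟨⟨_, Quotient.mk _ x, rfl⟩, ⟨_, Quotient.mk _ y, rfl⟩, fun heq ↦
    hxy (Quotient.exact (Quotient.out_inj.mp (congrArg Subtype.val heq)))⟩
  obtain ⟨f⟩ := Order.embedding_from_countable_to_dense M D
  exact ⟨f.trans (OrderEmbedding.subtype _)⟩

end Dichotomy

/-- The countable linear orders are well quasi-ordered by embeddability. -/
theorem countable_linear_orders_wqo (L : ℕ → Type*) [∀ i, LinearOrder (L i)]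
    [∀ i, Countable (L i)] :
    ∃ i j : ℕ, i < j ∧ Nonempty (L i ↪o L j) := by
  by_cases h : ∀ i, HausdorffClass (univ : Set (L (i + 1)))
  · obtain ⟨i, j, hij, ⟨f⟩⟩ := exists_embeds_of_forall_isFiniteSum _ fun i ↦ (h i).isFiniteSum
    exact ⟨i + 1, j + 1, Nat.succ_lt_succ hij,
      ⟨(OrderIso.Set.univ.symm.toOrderEmbedding.trans f).trans
        OrderIso.Set.univ.toOrderEmbedding⟩⟩
  · push Not at h
    obtain ⟨i, hi⟩ := h
    exact ⟨0, i + 1, i.succ_pos, nonempty_orderEmbedding_of_not_hausdorffClass hi (L 0)⟩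
end
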